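/- arXiv:2105.06922 — 3 statements merged into one kernel-verified Lean document; each statement's English description precedes it below -/
import Mathlib

section
/- Let X be a nonempty type and D : X → X → ℝ a weak metric: D is symmetric, D(x,x) = 0 for all x, and there exists a metric D' on X (D' is symmetric, nonnegative, satisfies the triangle inequality, and D'(x,y) = 0 iff x = y) with D'(x,y) ≤ D(x,y) for all x, y. For each natural number N define D_N(x,y) as the infimum, over all chains z : Fin (N+2) → X with z 0 = x and z (N+1) = y, of ∑_{i=0}^{N} D(z_i, z_{i+1}); and define D_∞(x,y) := ⨅_{N ∈ ℕ} D_N(x,y). Then D_∞ is a metric on X (symmetric, D_∞(x,y) = 0 iff x = y, triangle inequality), D_∞(x,y) ≤ D(x,y) for all x, y, and D_∞ is the maximum metric dominated by D: every metric D'' on X with D''(x,y) ≤ D(x,y) for all x, y satisfies D''(x,y) ≤ D_∞(x,y) for all x, y. -/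
/-- The infimal cost of a chain of `N+1` steps joining `x` to `y`. -/
noncomputable def chainDist {X : Type*} (D : X → X → ℝ) (N : ℕ) (x y : X) : ℝ :=
  sInf {s : ℝ | ∃ z : Fin (N + 2) → X, z 0 = x ∧ z (Fin.last (N + 1)) = y ∧
    s = ∑ i : Fin (N + 1), D (z i.castSucc) (z i.succ)}

/-- The induced metric: the infimum over all chain lengths. -/
noncomputable def inducedDist {X : Type*} (D : X → X → ℝ) (x y : X) : ℝ :=
  ⨅ N : ℕ, chainDist D N x y

/-!
Chains of all lengths from `x` to `y` and from `y` to `z` concatenate, so the infimum of their costs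
satisfies the triangle inequality, and one-step chains show that it is at most `D`. Conversely, a
function below `D` that satisfies the triangle inequality is at most the cost of every chain, hence
at most the infimum: for `D'` this separates points, for `D''` it is maximality.
-/

/-- The set of costs `∑ i, D (z i) (z (i + 1))` of the chains of `N + 1` steps joining `x` to `y`,
so that `chainDist D N x y` is its infimum. -/
def chainCosts {X : Type*} (D : X → X → ℝ) (N : ℕ) (x y : X) : Set ℝ :=
  {s : ℝ | ∃ z : Fin (N + 2) → X, z 0 = x ∧ z (Fin.last (N + 1)) = y ∧
    s = ∑ i : Fin (N + 1), D (z i.castSucc) (z i.succ)}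

section

variable {X : Type*} {D b : X → X → ℝ}

namespace chainCosts

theorem mem_zero {x y : X} {s : ℝ} : s ∈ chainCosts D 0 x y ↔ s = D x y := by
  constructor
  · rintro ⟨z, rfl, rfl, rfl⟩
    exact Fin.sum_univ_one _
  · rintro rfl
    exact ⟨![x, y], rfl, rfl, by simp⟩

theorem mem_succ {N : ℕ} {x y : X} {s : ℝ} :
    s ∈ chainCosts D (N + 1) x y ↔ ∃ w, ∃ t ∈ chainCosts D N w y, s = D x w + t := by
  constructor
  · rintro ⟨z, rfl, rfl, rfl⟩
    exact ⟨z 1, _, ⟨Fin.tail z, rfl, rfl, rfl⟩, Fin.sum_univ_succ _⟩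
  · rintro ⟨w, t, ⟨z, rfl, rfl, rfl⟩, rfl⟩
    let z' : Fin (N + 3) → X := Fin.cons x z
    exact ⟨z', rfl, rfl, (Fin.sum_univ_succ fun i => D (z' i.castSucc) (z' i.succ)).symm⟩

theorem nonempty (D : X → X → ℝ) (N : ℕ) (x y : X) : (chainCosts D N x y).Nonempty := by
  induction N generalizing x with
  | zero => exact ⟨_, mem_zero.2 rfl⟩
  | succ N ih =>
    obtain ⟨t, ht⟩ := ih x
    exact ⟨_, mem_succ.2 ⟨x, t, ht, rfl⟩⟩

theorem add_mem {N M : ℕ} {x y z : X} {s t : ℝ} (hs : s ∈ chainCosts D N x y)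
    (ht : t ∈ chainCosts D M y z) : s + t ∈ chainCosts D (M + N + 1) x z := by
  induction N generalizing x s with
  | zero => exact mem_succ.2 ⟨y, t, ht, by rw [mem_zero.1 hs]⟩
  | succ N ih =>
    obtain ⟨w, r, hr, rfl⟩ := mem_succ.1 hs
    exact mem_succ.2 ⟨w, r + t, ih hr, add_assoc _ _ _⟩

theorem mem_symm (hsymm : ∀ x y, D x y = D y x) {N : ℕ} {x y : X} {s : ℝ}
    (hs : s ∈ chainCosts D N x y) : s ∈ chainCosts D N y x := by
  induction N generalizing x s with
  | zero => rwa [mem_zero, hsymm, ← mem_zero]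
  | succ N ih =>
    obtain ⟨w, r, hr, rfl⟩ := mem_succ.1 hs
    have hrev : r + D x w ∈ chainCosts D (0 + N + 1) y x :=
      add_mem (ih hr) (mem_zero.2 (hsymm x w))
    rwa [zero_add, add_comm r] at hrev

theorem comm (hsymm : ∀ x y, D x y = D y x) (N : ℕ) (x y : X) :
    chainCosts D N x y = chainCosts D N y x :=
  Set.Subset.antisymm (fun _ => mem_symm hsymm) fun _ => mem_symm hsymm

theorem le_of_mem (htri : ∀ x y z, b x z ≤ b x y + b y z) (hle : ∀ x y, b x y ≤ D x y)
    {N : ℕ} {x y : X} {s : ℝ} (hs : s ∈ chainCosts D N x y) : b x y ≤ s := by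
  induction N generalizing x s with
  | zero => exact (hle x y).trans_eq (mem_zero.1 hs).symm
  | succ N ih =>
    obtain ⟨w, r, hr, rfl⟩ := mem_succ.1 hs
    exact (htri x w y).trans (add_le_add (hle x w) (ih hr))

end chainCosts

theorem isGLB_chainDist (htri : ∀ x y z, b x z ≤ b x y + b y z) (hle : ∀ x y, b x y ≤ D x y)
    (N : ℕ) (x y : X) : IsGLB (chainCosts D N x y) (chainDist D N x y) :=
  isGLB_csInf (chainCosts.nonempty D N x y) ⟨b x y, fun _ => chainCosts.le_of_mem htri hle⟩

theorem le_chainDist (htri : ∀ x y z, b x z ≤ b x y + b y z) (hle : ∀ x y, b x y ≤ D x y)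
    (N : ℕ) (x y : X) : b x y ≤ chainDist D N x y :=
  le_csInf (chainCosts.nonempty D N x y) fun _ => chainCosts.le_of_mem htri hle

theorem le_inducedDist (htri : ∀ x y z, b x z ≤ b x y + b y z) (hle : ∀ x y, b x y ≤ D x y)
    (x y : X) : b x y ≤ inducedDist D x y :=
  le_ciInf fun N => le_chainDist htri hle N x y

theorem isGLB_inducedDist (htri : ∀ x y z, b x z ≤ b x y + b y z) (hle : ∀ x y, b x y ≤ D x y)
    (x y : X) : IsGLB (⋃ N, chainCosts D N x y) (inducedDist D x y) := by
  have hbdd : BddBelow (Set.range fun N => chainDist D N x y) :=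
    ⟨b x y, Set.forall_mem_range.2 fun N => le_chainDist htri hle N x y⟩
  exact (isGLB_iUnion_iff_of_isGLB (isGLB_chainDist htri hle · x y) _).1 (isGLB_ciInf hbdd)

theorem inducedDist_le (htri : ∀ x y z, b x z ≤ b x y + b y z) (hle : ∀ x y, b x y ≤ D x y)
    (x y : X) : inducedDist D x y ≤ D x y :=
  (isGLB_inducedDist htri hle x y).1 (Set.mem_iUnion.2 ⟨0, chainCosts.mem_zero.2 rfl⟩)

theorem inducedDist_comm (hsymm : ∀ x y, D x y = D y x) (x y : X) :
    inducedDist D x y = inducedDist D y x :=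
  iInf_congr fun N => congrArg sInf (chainCosts.comm hsymm N x y)

open scoped Pointwise in
theorem inducedDist_triangle (htri : ∀ x y z, b x z ≤ b x y + b y z)
    (hle : ∀ x y, b x y ≤ D x y) (x y z : X) :
    inducedDist D x z ≤ inducedDist D x y + inducedDist D y z := by
  have hglb := isGLB_inducedDist htri hle
  have hconcat : (⋃ N, chainCosts D N x y) + ⋃ N, chainCosts D N y z ⊆
      ⋃ N, chainCosts D N x z := by
    rintro _ ⟨s, hs, t, ht, rfl⟩
    obtain ⟨N, hs⟩ := Set.mem_iUnion.1 hs
    obtain ⟨M, ht⟩ := Set.mem_iUnion.1 ht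
    exact Set.mem_iUnion.2 ⟨M + N + 1, chainCosts.add_mem hs ht⟩
  exact ((hglb x y).add (hglb y z)).mono (hglb x z) hconcat

theorem inducedDist_eq_zero_iff (hzero : ∀ x, D x x = 0) (hnonneg : ∀ x y, 0 ≤ b x y)
    (heq : ∀ x y, b x y = 0 → x = y) (htri : ∀ x y z, b x z ≤ b x y + b y z)
    (hle : ∀ x y, b x y ≤ D x y) (x y : X) : inducedDist D x y = 0 ↔ x = y := by
  have hlow := le_inducedDist htri hle
  constructor
  · intro h
    exact heq x y (((hlow x y).trans_eq h).antisymm (hnonneg x y))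
  · rintro rfl
    exact ((inducedDist_le htri hle x x).trans_eq (hzero x)).antisymm
      ((hnonneg x x).trans (hlow x x))

end

theorem inducedDist_is_max_metric_general {X : Type*} (D : X → X → ℝ) (hzero : ∀ x, D x x = 0)
    (D' : X → X → ℝ)
    (hD'nonneg : ∀ x y, 0 ≤ D' x y)
    (hD'eq : ∀ x y, D' x y = 0 → x = y)
    (hD'tri : ∀ x y z, D' x z ≤ D' x y + D' y z)
    (hle : ∀ x y, D' x y ≤ D x y) :
    ((∀ x y, D x y = D y x) → ∀ x y, inducedDist D x y = inducedDist D y x) ∧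
    (∀ x y, 0 ≤ inducedDist D x y) ∧
    (∀ x y, inducedDist D x y = 0 ↔ x = y) ∧
    (∀ x y z, inducedDist D x z ≤ inducedDist D x y + inducedDist D y z) ∧
    (∀ x y, inducedDist D x y ≤ D x y) ∧
    (∀ D'' : X → X → ℝ,
      (∀ x y z, D'' x z ≤ D'' x y + D'' y z) →
      (∀ x y, D'' x y ≤ D x y) →
      ∀ x y, D'' x y ≤ inducedDist D x y) :=
  ⟨inducedDist_comm,
    fun x y => (hD'nonneg x y).trans (le_inducedDist hD'tri hle x y),
    inducedDist_eq_zero_iff hzero hD'nonneg hD'eq hD'tri hle,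
    inducedDist_triangle hD'tri hle,
    inducedDist_le hD'tri hle,
    fun _ => le_inducedDist⟩

/-- a weak metric induces a maximum metric dominated by it. -/
theorem inducedDist_is_max_metric {X : Type*} [Nonempty X] (D : X → X → ℝ)
    (hsymm : ∀ x y, D x y = D y x) (hzero : ∀ x, D x x = 0)
    (D' : X → X → ℝ)
    (hD'symm : ∀ x y, D' x y = D' y x)
    (hD'nonneg : ∀ x y, 0 ≤ D' x y)
    (hD'eq : ∀ x y, D' x y = 0 ↔ x = y)
    (hD'tri : ∀ x y z, D' x z ≤ D' x y + D' y z)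
    (hle : ∀ x y, D' x y ≤ D x y) :
    (∀ x y, inducedDist D x y = inducedDist D y x) ∧
    (∀ x y, 0 ≤ inducedDist D x y) ∧
    (∀ x y, inducedDist D x y = 0 ↔ x = y) ∧
    (∀ x y z, inducedDist D x z ≤ inducedDist D x y + inducedDist D y z) ∧
    (∀ x y, inducedDist D x y ≤ D x y) ∧
    (∀ D'' : X → X → ℝ,
      (∀ x y, D'' x y = D'' y x) → (∀ x y, 0 ≤ D'' x y) →
      (∀ x y, D'' x y = 0 ↔ x = y) → (∀ x y z, D'' x z ≤ D'' x y + D'' y z) →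
      (∀ x y, D'' x y ≤ D x y) →
      ∀ x y, D'' x y ≤ inducedDist D x y) := by
  obtain ⟨hcomm, hnonneg, heq, htri, hleD, hmax⟩ :=
    inducedDist_is_max_metric_general D hzero D' hD'nonneg (fun x y => (hD'eq x y).1) hD'tri hle
  exact ⟨hcomm hsymm, hnonneg, heq, htri, hleD, fun D'' _ _ _ => hmax D''⟩
end

section
/- Let C be a Hermitian complex matrix indexed by Fin n × Fin n. The quantum optimal transport cost T_C is a semi-metric on Ω_n — meaning that for all ρ, σ ∈ Ω_n one has T_C(ρ,σ) = T_C(σ,ρ), T_C(ρ,σ) ≥ 0, and T_C(ρ,σ) = 0 if and only if ρ = σ — if and only if C is positive semidefinite and its kernel is exactly the symmetric subspace, i.e., for every vector v : Fin n × Fin n → ℂ, C.mulVec v = 0 if and only if v (i,j) = v (j,i) for all i, j. -/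
open Matrix ComplexOrder

/-- A density matrix: positive semidefinite with trace one. -/
def IsDensityMatrix {k : Type*} [Fintype k] [DecidableEq k] (ρ : Matrix k k ℂ) : Prop :=
  ρ.PosSemidef ∧ ρ.trace = 1

/-- Partial trace over the second factor. -/
noncomputable def trB {m n : ℕ} (R : Matrix (Fin m × Fin n) (Fin m × Fin n) ℂ) :
    Matrix (Fin m) (Fin m) ℂ :=
  Matrix.of fun i j => ∑ p, R (i, p) (j, p)

/-- Partial trace over the first factor. -/
noncomputable def trA {m n : ℕ} (R : Matrix (Fin m × Fin n) (Fin m × Fin n) ℂ) :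
    Matrix (Fin n) (Fin n) ℂ :=
  Matrix.of fun p q => ∑ i, R (i, p) (i, q)

/-- The set of quantum couplings of two density matrices. -/
def QCouplings {m n : ℕ} (ρA : Matrix (Fin m) (Fin m) ℂ) (ρB : Matrix (Fin n) (Fin n) ℂ) :
    Set (Matrix (Fin m × Fin n) (Fin m × Fin n) ℂ) :=
  {R | IsDensityMatrix R ∧ trB R = ρA ∧ trA R = ρB}

/-- The quantum optimal transport cost. -/
noncomputable def QOT {m n : ℕ} (C : Matrix (Fin m × Fin n) (Fin m × Fin n) ℂ)
    (ρA : Matrix (Fin m) (Fin m) ℂ) (ρB : Matrix (Fin n) (Fin n) ℂ) : ℝ :=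
  sInf ((fun R => ((C * R).trace).re) '' QCouplings ρA ρB)

/-!
Couplings form a compact set, so for `C ≥ 0` the cost `T_C(ρ, σ)` vanishes iff some coupling of `ρ`
and `σ` has its range in `ker C`. A coupling with symmetric columns has equal marginals, and
`∑ (tr P_k)⁻¹ • P_k ⊗ P_k`, for a decomposition `ρ = ∑ P_k` into rank-one terms, is such a coupling
of `ρ` with itself. This settles one direction, since a Hermitian `C` vanishing on symmetric
vectors is invariant under exchanging the factors.

Conversely, the projection onto an eigenvector of `C` couples its own marginals at a cost equal to
the eigenvalue, so `C ≥ 0`. The only coupling of the pure state `x x*` with itself is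
`(x ⊗ x) (x ⊗ x)*`, so `x ⊗ x ∈ ker C`, and these vectors span the symmetric subspace. Finally, a
pure state in `ker C` couples its marginals at no cost, so they are equal; reading it as a matrix
`V`, this says `V V* = Vᵀ Vᵀ*`. The same holds for `V + c • 1`, because the identity matrix is
symmetric, and `c = 1, i` then force `V = Vᵀ`.
-/

open scoped Kronecker

section LinearAlgebra

variable {𝕜 ι κ : Type*} [RCLike 𝕜] [Fintype ι]

lemma trace_mul_vecMulVec (A : Matrix ι ι 𝕜) (u v : ι → 𝕜) :
    (A * vecMulVec u v).trace = v ⬝ᵥ A *ᵥ u := by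
  rw [mul_vecMulVec, trace_vecMulVec, dotProduct_comm]

lemma trace_mul_sum_vecMulVec_self_star [Fintype κ] (A : Matrix ι ι 𝕜) (v : κ → ι → 𝕜) :
    (A * ∑ k, vecMulVec (v k) (star (v k))).trace = ∑ k, star (v k) ⬝ᵥ A *ᵥ v k := by
  simp only [Matrix.mul_sum, trace_sum, trace_mul_vecMulVec]

lemma trace_mul_nonneg_of_posSemidef {A B : Matrix ι ι 𝕜} (hA : A.PosSemidef)
    (hB : B.PosSemidef) : 0 ≤ (A * B).trace := by
  obtain ⟨_, v, rfl⟩ := posSemidef_iff_eq_sum_vecMulVec.1 hB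
  rw [trace_mul_sum_vecMulVec_self_star]
  exact Finset.sum_nonneg fun k _ => hA.dotProduct_mulVec_nonneg (v k)

lemma trace_mul_eq_zero_iff_of_posSemidef {A B : Matrix ι ι 𝕜} (hA : A.PosSemidef)
    (hB : B.PosSemidef) : (A * B).trace = 0 ↔ A * B = 0 := by
  refine ⟨fun h => ?_, fun h => by rw [h, trace_zero]⟩
  obtain ⟨_, v, rfl⟩ := posSemidef_iff_eq_sum_vecMulVec.1 hB
  rw [trace_mul_sum_vecMulVec_self_star,
    Finset.sum_eq_zero_iff_of_nonneg fun k _ => hA.dotProduct_mulVec_nonneg (v k)] at h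
  rw [Matrix.mul_sum]
  refine Finset.sum_eq_zero fun k hk => ?_
  rw [mul_vecMulVec, (hA.dotProduct_mulVec_zero_iff (v k)).1 (h k hk), zero_vecMulVec]

lemma mul_eq_zero_iff_forall_col_mem_ker {A : Matrix ι ι 𝕜} {R : Matrix ι κ 𝕜} :
    A * R = 0 ↔ ∀ b, R.col b ∈ LinearMap.ker A.mulVecLin :=
  ⟨fun h b => LinearMap.mem_ker.2 (congrArg (·.col b) h), fun h => ext_col h⟩

lemma isStarProjection_vecMulVec_self_star {x : ι → 𝕜} (hx : star x ⬝ᵥ x = 1) :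
    IsStarProjection (vecMulVec x (star x)) where
  isIdempotentElem := by rw [IsIdempotentElem, vecMulVec_mul_vecMulVec, hx, one_smul]
  isSelfAdjoint := (posSemidef_vecMulVec_self_star x).isHermitian

lemma exists_eq_smul_unit_vector {v : ι → 𝕜} (hv : v ≠ 0) :
    ∃ (c : 𝕜) (u : ι → 𝕜), star u ⬝ᵥ u = 1 ∧ v = c • u := by
  have hr : ‖WithLp.toLp 2 v‖ ≠ 0 := by simpa using hv
  have hc : (‖WithLp.toLp 2 v‖ : 𝕜) ≠ 0 := by exact_mod_cast hr
  have hvv : star v ⬝ᵥ v = (‖WithLp.toLp 2 v‖ : 𝕜) ^ 2 := by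
    rw [← inner_self_eq_norm_sq_to_K, EuclideanSpace.inner_toLp_toLp, dotProduct_comm]
  refine ⟨‖WithLp.toLp 2 v‖, (‖WithLp.toLp 2 v‖ : 𝕜)⁻¹ • v, ?_, (smul_inv_smul₀ hc v).symm⟩
  rw [star_smul, smul_dotProduct, dotProduct_smul, hvv]
  simp only [star_inv₀, RCLike.star_def, RCLike.conj_ofReal, smul_eq_mul]
  field_simp

lemma isSymm_of_forall_add_smul_one_mul_conjTranspose [DecidableEq ι] {V : Matrix ι ι ℂ}
    (h : ∀ c : ℂ, (V + c • 1) * (V + c • 1)ᴴ = (V + c • 1)ᵀ * (V + c • 1)ᵀᴴ) : V.IsSymm := by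
  have hexpand (A : Matrix ι ι ℂ) (c : ℂ) : (A + c • 1) * (A + c • 1)ᴴ =
      A * Aᴴ + (star c • A + c • Aᴴ) + (c * star c) • 1 := by
    simp only [conjTranspose_add, conjTranspose_smul, conjTranspose_one, add_mul, mul_add,
      Matrix.mul_smul, Matrix.smul_mul, Matrix.mul_one, Matrix.one_mul]
    module
  have hcross (c : ℂ) : star c • V + c • Vᴴ = star c • Vᵀ + c • Vᵀᴴ := by
    have h0 := h 0
    have hc := h c
    simp only [transpose_add, transpose_smul, transpose_one, hexpand, zero_smul, add_zero] at h0 hc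
    rw [h0] at hc
    exact add_left_cancel (add_right_cancel hc)
  have hadd : V + Vᴴ = Vᵀ + Vᵀᴴ := by simpa using hcross 1
  have hsub : V - Vᴴ = Vᵀ - Vᵀᴴ := by
    simpa [smul_smul, sub_eq_add_neg] using congrArg (Complex.I • ·) (hcross Complex.I)
  change Vᵀ = V
  linear_combination (norm := module) (-1 / 2 : ℂ) • hadd - (1 / 2 : ℂ) • hsub

end LinearAlgebra

section TensorVec

variable {R ι κ : Type*} [CommSemiring R]

/-- The elementary tensor `x ⊗ y` of two vectors, in coordinates. -/
def tensorVec (x : ι → R) (y : κ → R) : ι × κ → R := fun a => x a.1 * y a.2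

lemma vecMulVec_kronecker_vecMulVec (x u : ι → R) (y v : κ → R) :
    vecMulVec x u ⊗ₖ vecMulVec y v = vecMulVec (tensorVec x y) (tensorVec u v) := by
  ext a b
  exact mul_mul_mul_comm _ _ _ _

lemma star_tensorVec [StarRing R] (x : ι → R) (y : κ → R) :
    star (tensorVec x y) = tensorVec (star x) (star y) :=
  funext fun _ => star_mul' _ _

lemma smul_tensorVec_smul (c d : R) (x : ι → R) (y : κ → R) :
    tensorVec (c • x) (d • y) = (c * d) • tensorVec x y :=
  funext fun _ => mul_mul_mul_comm _ _ _ _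

lemma tensorVec_add_self (x y : ι → R) :
    tensorVec (x + y) (x + y) =
      tensorVec x x + tensorVec y y + (tensorVec x y + tensorVec y x) := by
  ext a
  simp only [tensorVec, Pi.add_apply]
  ring

end TensorVec

section SymmetricSubspace

variable {𝕜 ι : Type*}

variable (𝕜 ι) in
/-- The symmetric subspace of `(ι → 𝕜) ⊗ (ι → 𝕜)`, with tensors written in coordinates. -/
def symmetricSubspace [CommSemiring 𝕜] : Submodule 𝕜 (ι × ι → 𝕜) where
  carrier := {v | ∀ i j, v (i, j) = v (j, i)}
  add_mem' hv hw i j := congrArg₂ (· + ·) (hv i j) (hw i j)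
  zero_mem' _ _ := rfl
  smul_mem' c _ hv i j := congrArg (c * ·) (hv i j)

lemma tensorVec_self_mem_symmetricSubspace [CommSemiring 𝕜] (x : ι → 𝕜) :
    tensorVec x x ∈ symmetricSubspace 𝕜 ι :=
  fun _ _ => mul_comm _ _

lemma single_add_single_swap_mem_symmetricSubspace [CommSemiring 𝕜] [DecidableEq ι]
    (b : ι × ι) :
    Pi.single b 1 + Pi.single b.swap 1 ∈ symmetricSubspace 𝕜 ι := by
  intro i j
  simp only [Pi.add_apply, Pi.single_apply, Prod.ext_iff, Prod.fst_swap, Prod.snd_swap, add_comm,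
    and_comm]

lemma tensorVec_add_tensorVec_mem_span_tensorVec_self [CommRing 𝕜] (x y : ι → 𝕜) :
    tensorVec x y + tensorVec y x ∈
      Submodule.span 𝕜 (Set.range fun z : ι → 𝕜 => tensorVec z z) := by
  have hsq (z : ι → 𝕜) : tensorVec z z ∈ Submodule.span 𝕜 (Set.range fun z => tensorVec z z) :=
    Submodule.subset_span ⟨z, rfl⟩
  rw [← add_sub_cancel_left (tensorVec x x + tensorVec y y) (tensorVec x y + tensorVec y x),
    ← tensorVec_add_self]
  exact sub_mem (hsq _) (add_mem (hsq x) (hsq y))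

lemma span_tensorVec_self [Field 𝕜] [Finite ι] [NeZero (2 : 𝕜)] :
    Submodule.span 𝕜 (Set.range fun x : ι → 𝕜 => tensorVec x x) = symmetricSubspace 𝕜 ι := by
  classical
  have := Fintype.ofFinite ι
  refine le_antisymm (Submodule.span_le.2 ?_) fun v hv => ?_
  · rintro _ ⟨x, rfl⟩
    exact tensorVec_self_mem_symmetricSubspace x
  let e (i : ι) : ι → 𝕜 := Pi.single i 1
  have hsum : v = (2 : 𝕜)⁻¹ •
      ∑ i, ∑ j, v (i, j) • (tensorVec (e i) (e j) + tensorVec (e j) (e i)) := by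
    rw [eq_inv_smul_iff₀ two_ne_zero]
    ext ⟨p, q⟩
    simp [e, tensorVec, Pi.single_apply, Finset.sum_add_distrib, two_mul, hv q p]
  rw [hsum]
  exact Submodule.smul_mem _ _ <| sum_mem fun i _ => sum_mem fun j _ =>
    Submodule.smul_mem _ _ (tensorVec_add_tensorVec_mem_span_tensorVec_self _ _)

lemma submatrix_swap_eq_self_of_isHermitian [CommRing 𝕜] [Fintype ι] [StarRing 𝕜]
    {C : Matrix (ι × ι) (ι × ι) 𝕜} (hC : C.IsHermitian)
    (hker : symmetricSubspace 𝕜 ι ≤ LinearMap.ker C.mulVecLin) :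
    C.submatrix Prod.swap Prod.swap = C := by
  classical
  have hanti (a b : ι × ι) : C a b.swap = -C a b := by
    have h := hker (single_add_single_swap_mem_symmetricSubspace b)
    rw [LinearMap.mem_ker, mulVecLin_apply, mulVec_add, mulVec_single_one, mulVec_single_one] at h
    exact eq_neg_of_add_eq_zero_right (congrFun h a)
  ext a b
  rw [submatrix_apply, hanti, ← hC.apply, hanti, star_neg, neg_neg, hC.apply]

end SymmetricSubspace

section DensityMatrix

variable {k l : Type*} [Fintype k] [Fintype l] [DecidableEq k]

lemma isDensityMatrix_vecMulVec_self_star {v : k → ℂ} (hv : star v ⬝ᵥ v = 1) :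
    IsDensityMatrix (vecMulVec v (star v)) :=
  ⟨posSemidef_vecMulVec_self_star v, by rw [trace_vecMulVec, dotProduct_comm, hv]⟩

omit [DecidableEq k] in
lemma trace_conjTranspose_mul_self_eq_sum_norm_sq (X : Matrix l k ℂ) :
    (Xᴴ * X).trace = ((∑ j, ∑ i, ‖X i j‖ ^ 2 : ℝ) : ℂ) := by
  simp [Matrix.trace, mul_apply, Complex.conj_mul']

omit [DecidableEq k] in
lemma isCompact_setOf_trace_conjTranspose_mul_self_eq_one :
    IsCompact {X : Matrix l k ℂ | (Xᴴ * X).trace = 1} := by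
  refine (isCompact_univ_pi fun _ => isCompact_univ_pi fun _ =>
    isCompact_closedBall (0 : ℂ) 1).of_isClosed_subset (isClosed_eq (by fun_prop) (by fun_prop)) ?_
  rintro X hX i - j -
  have hsum : (∑ j, ∑ i, ‖X i j‖ ^ 2 : ℝ) = 1 := by
    exact_mod_cast (trace_conjTranspose_mul_self_eq_sum_norm_sq X).symm.trans hX
  have hij : ‖X i j‖ ^ 2 ≤ 1 :=
    calc ‖X i j‖ ^ 2 ≤ ∑ i, ‖X i j‖ ^ 2 :=
          Finset.single_le_sum (f := fun i => ‖X i j‖ ^ 2) (fun _ _ => by positivity) (by simp)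
      _ ≤ ∑ j, ∑ i, ‖X i j‖ ^ 2 :=
          Finset.single_le_sum (f := fun j => ∑ i, ‖X i j‖ ^ 2) (fun _ _ => by positivity)
            (by simp)
      _ = 1 := hsum
  simpa using (sq_le_one_iff₀ (norm_nonneg _)).1 hij

open scoped MatrixOrder in
lemma isCompact_setOf_isDensityMatrix : IsCompact {ρ : Matrix k k ℂ | IsDensityMatrix ρ} := by
  have himage : {ρ : Matrix k k ℂ | IsDensityMatrix ρ} =
      (fun X : Matrix k k ℂ => Xᴴ * X) '' {X | (Xᴴ * X).trace = 1} := by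
    ext ρ
    constructor
    · rintro ⟨hpos, htr⟩
      obtain ⟨X, rfl⟩ := CStarAlgebra.nonneg_iff_eq_star_mul_self.1 hpos.nonneg
      exact ⟨X, htr, rfl⟩
    · rintro ⟨X, htr, rfl⟩
      exact ⟨posSemidef_conjTranspose_mul_self X, htr⟩
  rw [himage]
  exact isCompact_setOf_trace_conjTranspose_mul_self_eq_one.image (by fun_prop)

end DensityMatrix

section PartialTrace

variable {m n : ℕ}

lemma trB_smul (c : ℂ) (R : Matrix (Fin m × Fin n) (Fin m × Fin n) ℂ) :
    trB (c • R) = c • trB R := by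
  ext
  simp [trB, Finset.mul_sum]

lemma trA_smul (c : ℂ) (R : Matrix (Fin m × Fin n) (Fin m × Fin n) ℂ) :
    trA (c • R) = c • trA R := by
  ext
  simp [trA, Finset.mul_sum]

lemma trB_sum {κ : Type*} [Fintype κ] (R : κ → Matrix (Fin m × Fin n) (Fin m × Fin n) ℂ) :
    trB (∑ k, R k) = ∑ k, trB (R k) := by
  ext
  simpa [trB, Matrix.sum_apply] using Finset.sum_comm

lemma trA_sum {κ : Type*} [Fintype κ] (R : κ → Matrix (Fin m × Fin n) (Fin m × Fin n) ℂ) :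
    trA (∑ k, R k) = ∑ k, trA (R k) := by
  ext
  simpa [trA, Matrix.sum_apply] using Finset.sum_comm

lemma trB_kronecker (A : Matrix (Fin m) (Fin m) ℂ) (B : Matrix (Fin n) (Fin n) ℂ) :
    trB (A ⊗ₖ B) = B.trace • A := by
  ext
  simp [trB, Matrix.trace, ← Finset.mul_sum, mul_comm]

lemma trA_kronecker (A : Matrix (Fin m) (Fin m) ℂ) (B : Matrix (Fin n) (Fin n) ℂ) :
    trA (A ⊗ₖ B) = A.trace • B := by
  ext
  simp [trA, Matrix.trace, Finset.sum_mul]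

lemma trace_trB (R : Matrix (Fin m × Fin n) (Fin m × Fin n) ℂ) : (trB R).trace = R.trace := by
  simp [Matrix.trace, trB, Fintype.sum_prod_type]

lemma trace_trA (R : Matrix (Fin m × Fin n) (Fin m × Fin n) ℂ) : (trA R).trace = R.trace := by
  simp [Matrix.trace, trA, Fintype.sum_prod_type_right]

lemma trace_mul_kronecker_one (R : Matrix (Fin m × Fin n) (Fin m × Fin n) ℂ)
    (Q : Matrix (Fin m) (Fin m) ℂ) : (R * Q ⊗ₖ 1).trace = (trB R * Q).trace := by
  simp only [Matrix.trace, diag_apply, mul_apply, kronecker_apply, trB, of_apply,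
    Fintype.sum_prod_type, Matrix.one_apply, mul_ite, mul_one, mul_zero, Finset.sum_ite_eq',
    Finset.mem_univ, if_true, Finset.sum_mul]
  exact Finset.sum_congr rfl fun _ _ => Finset.sum_comm

lemma trace_mul_one_kronecker (R : Matrix (Fin m × Fin n) (Fin m × Fin n) ℂ)
    (Q : Matrix (Fin n) (Fin n) ℂ) : (R * 1 ⊗ₖ Q).trace = (trA R * Q).trace := by
  simp only [Matrix.trace, diag_apply, mul_apply, kronecker_apply, trA, of_apply,
    Fintype.sum_prod_type_right, Matrix.one_apply, ite_mul, one_mul, zero_mul, mul_ite, mul_zero,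
    Finset.sum_ite_eq', Finset.mem_univ, if_true, Finset.sum_mul]
  exact Finset.sum_congr rfl fun _ _ => Finset.sum_comm

open scoped MatrixOrder in
lemma mul_kronecker_one_eq_self {R : Matrix (Fin m × Fin n) (Fin m × Fin n) ℂ}
    (hR : R.PosSemidef) {P : Matrix (Fin m) (Fin m) ℂ} (hP : IsStarProjection P)
    (h : trB R * P = trB R) : R * P ⊗ₖ 1 = R := by
  have hcompl : R * (1 - P) ⊗ₖ 1 = 0 := by
    rw [← trace_mul_eq_zero_iff_of_posSemidef hR
      (hP.one_sub_nonneg.posSemidef.kronecker PosSemidef.one), trace_mul_kronecker_one, mul_sub,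
      mul_one, h, sub_self, trace_zero]
  rw [← zero_add (R * P ⊗ₖ 1), ← hcompl, ← mul_add, ← add_kronecker, sub_add_cancel,
    one_kronecker_one, mul_one]

open scoped MatrixOrder in
lemma mul_one_kronecker_eq_self {R : Matrix (Fin m × Fin n) (Fin m × Fin n) ℂ}
    (hR : R.PosSemidef) {P : Matrix (Fin n) (Fin n) ℂ} (hP : IsStarProjection P)
    (h : trA R * P = trA R) : R * 1 ⊗ₖ P = R := by
  have hcompl : R * 1 ⊗ₖ (1 - P) = 0 := by
    rw [← trace_mul_eq_zero_iff_of_posSemidef hR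
      (PosSemidef.one.kronecker hP.one_sub_nonneg.posSemidef), trace_mul_one_kronecker, mul_sub,
      mul_one, h, sub_self, trace_zero]
  rw [← zero_add (R * 1 ⊗ₖ P), ← hcompl, ← mul_add, ← kronecker_add, sub_add_cancel,
    one_kronecker_one, mul_one]

lemma posSemidef_trB {R : Matrix (Fin m × Fin n) (Fin m × Fin n) ℂ} (hR : R.PosSemidef) :
    (trB R).PosSemidef := by
  have hsum : trB R = ∑ p, R.submatrix (·, p) (·, p) := by
    ext
    simp [trB, Matrix.sum_apply]
  rw [hsum]
  exact posSemidef_sum _ fun p _ => hR.submatrix _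

lemma posSemidef_trA {R : Matrix (Fin m × Fin n) (Fin m × Fin n) ℂ} (hR : R.PosSemidef) :
    (trA R).PosSemidef :=
  posSemidef_trB (hR.submatrix Prod.swap)

lemma isDensityMatrix_trB {R : Matrix (Fin m × Fin n) (Fin m × Fin n) ℂ}
    (hR : IsDensityMatrix R) : IsDensityMatrix (trB R) :=
  ⟨posSemidef_trB hR.1, (trace_trB R).trans hR.2⟩

lemma isDensityMatrix_trA {R : Matrix (Fin m × Fin n) (Fin m × Fin n) ℂ}
    (hR : IsDensityMatrix R) : IsDensityMatrix (trA R) :=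
  ⟨posSemidef_trA hR.1, (trace_trA R).trans hR.2⟩

lemma trB_vecMulVec_self_star (v : Fin m × Fin n → ℂ) :
    trB (vecMulVec v (star v)) = of (Function.curry v) * (of (Function.curry v))ᴴ :=
  rfl

lemma trA_vecMulVec_self_star (v : Fin m × Fin n → ℂ) :
    trA (vecMulVec v (star v)) = (of (Function.curry v))ᵀ * (of (Function.curry v))ᵀᴴ :=
  rfl

end PartialTrace

section Couplings

variable {m n : ℕ} {ρA : Matrix (Fin m) (Fin m) ℂ} {ρB : Matrix (Fin n) (Fin n) ℂ}

lemma kronecker_mem_QCouplings (hA : IsDensityMatrix ρA) (hB : IsDensityMatrix ρB) :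
    ρA ⊗ₖ ρB ∈ QCouplings ρA ρB :=
  ⟨⟨hA.1.kronecker hB.1, by rw [trace_kronecker, hA.2, hB.2, one_mul]⟩,
    by rw [trB_kronecker, hB.2, one_smul], by rw [trA_kronecker, hA.2, one_smul]⟩

lemma submatrix_swap_mem_QCouplings {R : Matrix (Fin m × Fin n) (Fin m × Fin n) ℂ}
    (hR : R ∈ QCouplings ρA ρB) : R.submatrix Prod.swap Prod.swap ∈ QCouplings ρB ρA :=
  ⟨⟨hR.1.1.submatrix _, (Equiv.sum_comp (Equiv.prodComm _ _) fun a => R a a).trans hR.1.2⟩,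
    hR.2.2, hR.2.1⟩

variable (ρA ρB) in
lemma isCompact_QCouplings : IsCompact (QCouplings ρA ρB) := by
  refine isCompact_setOf_isDensityMatrix.inter_right
    ((isClosed_eq ?_ continuous_const).inter (isClosed_eq ?_ continuous_const))
  · unfold trB
    fun_prop
  · unfold trA
    fun_prop

lemma eq_kronecker_of_mem_QCouplings_vecMulVec {x : Fin m → ℂ} {y : Fin n → ℂ}
    (hx : star x ⬝ᵥ x = 1) (hy : star y ⬝ᵥ y = 1) {R : Matrix (Fin m × Fin n) (Fin m × Fin n) ℂ}
    (hR : R ∈ QCouplings (vecMulVec x (star x)) (vecMulVec y (star y))) :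
    R = vecMulVec x (star x) ⊗ₖ vecMulVec y (star y) := by
  obtain ⟨⟨hpos, htr⟩, hB, hA⟩ := hR
  have hP := isStarProjection_vecMulVec_self_star hx
  have hQ := isStarProjection_vecMulVec_self_star hy
  have hRP := mul_kronecker_one_eq_self hpos hP (by rw [hB, hP.isIdempotentElem.eq])
  have hRQ := mul_one_kronecker_eq_self hpos hQ (by rw [hA, hQ.isIdempotentElem.eq])
  set w := tensorVec x y
  have hkron : vecMulVec x (star x) ⊗ₖ vecMulVec y (star y) = vecMulVec w (star w) := by
    rw [vecMulVec_kronecker_vecMulVec, star_tensorVec]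
  have hright : R * vecMulVec w (star w) = R :=
    calc R * vecMulVec w (star w)
        = R * (vecMulVec x (star x) ⊗ₖ 1) * (1 ⊗ₖ vecMulVec y (star y)) := by
          rw [Matrix.mul_assoc, ← mul_kronecker_mul, Matrix.mul_one, Matrix.one_mul, hkron]
      _ = R := by rw [hRP, hRQ]
  have hleft : vecMulVec w (star w) * R = R := by
    simpa [conjTranspose_mul, conjTranspose_vecMulVec, hpos.isHermitian.eq] using
      congrArg conjTranspose hright
  have hone : star w ⬝ᵥ R *ᵥ w = 1 := by rw [← trace_mul_vecMulVec, hright, htr]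
  calc R = vecMulVec w (star w) * (R * vecMulVec w (star w)) := by rw [hright, hleft]
    _ = vecMulVec x (star x) ⊗ₖ vecMulVec y (star y) := by
      rw [mul_vecMulVec, vecMulVec_mul_vecMulVec, hone, one_smul, hkron]

end Couplings

section TransportCost

variable {m n : ℕ} {C : Matrix (Fin m × Fin n) (Fin m × Fin n) ℂ}
  {ρA : Matrix (Fin m) (Fin m) ℂ} {ρB : Matrix (Fin n) (Fin n) ℂ}

variable (C ρA ρB) in
lemma isCompact_image_re_trace_mul_QCouplings :
    IsCompact ((fun R => (C * R).trace.re) '' QCouplings ρA ρB) :=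
  (isCompact_QCouplings ρA ρB).image (by fun_prop)

lemma QOT_le_re_trace_mul {R : Matrix (Fin m × Fin n) (Fin m × Fin n) ℂ}
    (hR : R ∈ QCouplings ρA ρB) : QOT C ρA ρB ≤ (C * R).trace.re :=
  csInf_le (isCompact_image_re_trace_mul_QCouplings C ρA ρB).bddBelow ⟨R, hR, rfl⟩

variable (C) in
lemma exists_re_trace_mul_eq_QOT (hA : IsDensityMatrix ρA) (hB : IsDensityMatrix ρB) :
    ∃ R ∈ QCouplings ρA ρB, (C * R).trace.re = QOT C ρA ρB :=
  (isCompact_image_re_trace_mul_QCouplings C ρA ρB).sInf_mem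
    (Set.Nonempty.image _ ⟨_, kronecker_mem_QCouplings hA hB⟩)

variable (C ρA ρB) in
lemma QOT_submatrix_swap : QOT (C.submatrix Prod.swap Prod.swap) ρB ρA = QOT C ρA ρB := by
  have htrace (R : Matrix (Fin n × Fin m) (Fin n × Fin m) ℂ) :
      (C.submatrix Prod.swap Prod.swap * R).trace =
        (C * R.submatrix Prod.swap Prod.swap).trace := by
    simp only [Matrix.trace, diag_apply, mul_apply, submatrix_apply]
    rw [← Equiv.sum_comp (Equiv.prodComm (Fin m) (Fin n))]
    refine Finset.sum_congr rfl fun a _ => ?_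
    rw [← Equiv.sum_comp (Equiv.prodComm (Fin m) (Fin n))]
    rfl
  unfold QOT
  congr 1
  ext t
  constructor
  · rintro ⟨R, hR, rfl⟩
    exact ⟨_, submatrix_swap_mem_QCouplings hR, congrArg Complex.re (htrace R).symm⟩
  · rintro ⟨R, hR, rfl⟩
    exact ⟨_, submatrix_swap_mem_QCouplings hR, congrArg Complex.re (htrace _)⟩

lemma QOT_nonneg (hC : C.PosSemidef) : 0 ≤ QOT C ρA ρB := by
  refine Real.sInf_nonneg ?_
  rintro _ ⟨R, hR, rfl⟩
  exact (Complex.nonneg_iff.1 (trace_mul_nonneg_of_posSemidef hC hR.1.1)).1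

lemma QOT_eq_zero_iff_exists_mul_eq_zero (hC : C.PosSemidef) (hA : IsDensityMatrix ρA)
    (hB : IsDensityMatrix ρB) : QOT C ρA ρB = 0 ↔ ∃ R ∈ QCouplings ρA ρB, C * R = 0 := by
  constructor
  · intro h
    obtain ⟨R, hR, hre⟩ := exists_re_trace_mul_eq_QOT C hA hB
    have him := (Complex.nonneg_iff.1 (trace_mul_nonneg_of_posSemidef hC hR.1.1)).2
    exact ⟨R, hR, (trace_mul_eq_zero_iff_of_posSemidef hC hR.1.1).1
      (Complex.ext (hre.trans h) him.symm)⟩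
  · rintro ⟨R, hR, hCR⟩
    refine le_antisymm ?_ (QOT_nonneg hC)
    simpa [hCR] using QOT_le_re_trace_mul (C := C) hR

lemma mulVec_tensorVec_eq_zero_of_QOT_eq_zero (hC : C.PosSemidef) {x : Fin m → ℂ} {y : Fin n → ℂ}
    (hx : star x ⬝ᵥ x = 1) (hy : star y ⬝ᵥ y = 1)
    (h : QOT C (vecMulVec x (star x)) (vecMulVec y (star y)) = 0) : C *ᵥ tensorVec x y = 0 := by
  obtain ⟨R, hR, hCR⟩ := (QOT_eq_zero_iff_exists_mul_eq_zero hC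
    (isDensityMatrix_vecMulVec_self_star hx) (isDensityMatrix_vecMulVec_self_star hy)).1 h
  rw [eq_kronecker_of_mem_QCouplings_vecMulVec hx hy hR, vecMulVec_kronecker_vecMulVec,
    ← star_tensorVec, mul_vecMulVec] at hCR
  rcases vecMulVec_eq_zero.1 hCR with hCxy | hxy
  · exact hCxy
  · rw [star_eq_zero.1 hxy, mulVec_zero]

lemma posSemidef_of_forall_QOT_nonneg (hC : C.IsHermitian)
    (h : ∀ ρA ρB, IsDensityMatrix ρA → IsDensityMatrix ρB → 0 ≤ QOT C ρA ρB) :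
    C.PosSemidef := by
  refine hC.posSemidef_iff_eigenvalues_nonneg.2 fun a => ?_
  set u := (hC.eigenvectorBasis a).ofLp
  have hu : star u ⬝ᵥ u = 1 := by
    rw [dotProduct_comm, ← EuclideanSpace.inner_eq_star_dotProduct]
    exact inner_self_eq_one_of_norm_eq_one (hC.eigenvectorBasis.orthonormal.1 a)
  have hd := isDensityMatrix_vecMulVec_self_star hu
  calc 0 ≤ QOT C (trB (vecMulVec u (star u))) (trA (vecMulVec u (star u))) :=
        h _ _ (isDensityMatrix_trB hd) (isDensityMatrix_trA hd)
    _ ≤ (C * vecMulVec u (star u)).trace.re := QOT_le_re_trace_mul ⟨hd, rfl, rfl⟩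
    _ = hC.eigenvalues a := by rw [trace_mul_vecMulVec, hC.eigenvalues_eq]; rfl

end TransportCost

section Semimetric

variable {n : ℕ} {ρ σ : Matrix (Fin n) (Fin n) ℂ}

lemma trB_eq_trA_of_forall_col_mem_symmetricSubspace
    {R : Matrix (Fin n × Fin n) (Fin n × Fin n) ℂ} (hR : R.IsHermitian)
    (hcol : ∀ b, R.col b ∈ symmetricSubspace ℂ (Fin n)) : trB R = trA R := by
  have hrow (a : Fin n × Fin n) (i j : Fin n) : R a (i, j) = R a (j, i) := by
    rw [← hR.apply, ← hR.apply a]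
    exact congrArg star (hcol a i j)
  ext i j
  simp only [trB, trA, of_apply]
  exact Finset.sum_congr rfl fun p _ => (hcol _ i p).trans (hrow _ j p)

lemma exists_mem_QCouplings_self_forall_col_mem_symmetricSubspace (hρ : IsDensityMatrix ρ) :
    ∃ R ∈ QCouplings ρ ρ, ∀ b, R.col b ∈ symmetricSubspace ℂ (Fin n) := by
  obtain ⟨hpos, htr⟩ := hρ
  obtain ⟨_, v, hv⟩ := posSemidef_iff_eq_sum_vecMulVec.1 hpos
  set P := fun k => vecMulVec (v k) (star (v k))
  have hP (k) : (P k).PosSemidef := posSemidef_vecMulVec_self_star _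
  have hscale (k) : (P k).trace⁻¹ • (P k).trace • P k = P k := by
    rcases eq_or_ne (P k).trace 0 with h0 | h0
    · rw [(hP k).trace_eq_zero_iff.1 h0, smul_zero, smul_zero]
    · exact inv_smul_smul₀ h0 _
  let R := ∑ k, (P k).trace⁻¹ • (P k ⊗ₖ P k)
  have hB : trB R = ρ := by simp only [R, trB_sum, trB_smul, trB_kronecker, hscale, hv]
  have hA : trA R = ρ := by simp only [R, trA_sum, trA_smul, trA_kronecker, hscale, hv]
  have hRpos : R.PosSemidef := posSemidef_sum _ fun k _ =>
    ((hP k).kronecker (hP k)).smul (inv_nonneg_of_nonneg (hP k).trace_nonneg)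
  refine ⟨R, ⟨⟨hRpos, by rw [← trace_trB, hB, htr]⟩, hB, hA⟩, fun b i j => ?_⟩
  simp only [R, col_apply, Matrix.sum_apply, Matrix.smul_apply]
  refine Finset.sum_congr rfl fun k _ => congrArg _ ?_
  rw [vecMulVec_kronecker_vecMulVec, vecMulVec_apply, vecMulVec_apply,
    tensorVec_self_mem_symmetricSubspace]

lemma eq_iff_exists_mem_QCouplings_forall_col_mem_symmetricSubspace (hρ : IsDensityMatrix ρ) :
    ρ = σ ↔ ∃ R ∈ QCouplings ρ σ, ∀ b, R.col b ∈ symmetricSubspace ℂ (Fin n) := by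
  constructor
  · rintro rfl
    exact exists_mem_QCouplings_self_forall_col_mem_symmetricSubspace hρ
  · rintro ⟨R, ⟨⟨hpos, -⟩, rfl, rfl⟩, hcol⟩
    exact trB_eq_trA_of_forall_col_mem_symmetricSubspace hpos.isHermitian hcol

variable {C : Matrix (Fin n × Fin n) (Fin n × Fin n) ℂ}

lemma QOT_eq_zero_iff_eq (hC : C.PosSemidef)
    (hker : LinearMap.ker C.mulVecLin = symmetricSubspace ℂ (Fin n)) (hρ : IsDensityMatrix ρ)
    (hσ : IsDensityMatrix σ) : QOT C ρ σ = 0 ↔ ρ = σ := by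
  rw [QOT_eq_zero_iff_exists_mul_eq_zero hC hρ hσ,
    eq_iff_exists_mem_QCouplings_forall_col_mem_symmetricSubspace hρ]
  simp only [mul_eq_zero_iff_forall_col_mem_ker, hker]

lemma QOT_comm (hC : C.IsHermitian)
    (hker : symmetricSubspace ℂ (Fin n) ≤ LinearMap.ker C.mulVecLin) :
    QOT C ρ σ = QOT C σ ρ := by
  rw [← QOT_submatrix_swap C ρ σ, submatrix_swap_eq_self_of_isHermitian hC hker]

lemma symmetricSubspace_le_ker_of_forall_QOT_self_eq_zero (hC : C.PosSemidef)
    (h : ∀ ρ, IsDensityMatrix ρ → QOT C ρ ρ = 0) :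
    symmetricSubspace ℂ (Fin n) ≤ LinearMap.ker C.mulVecLin := by
  rw [← span_tensorVec_self]
  refine Submodule.span_le.2 (Set.range_subset_iff.2 fun x => LinearMap.mem_ker.2 ?_)
  rcases eq_or_ne x 0 with rfl | hx
  · rw [show tensorVec (0 : Fin n → ℂ) 0 = 0 from funext fun _ => zero_mul _, map_zero]
  obtain ⟨c, u, hu, rfl⟩ := exists_eq_smul_unit_vector hx
  have hCu : C *ᵥ tensorVec u u = 0 :=
    mulVec_tensorVec_eq_zero_of_QOT_eq_zero hC hu hu (h _ (isDensityMatrix_vecMulVec_self_star hu))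
  rw [smul_tensorVec_smul, map_smul, mulVecLin_apply, hCu, smul_zero]

lemma le_symmetricSubspace_of_forall_trB_eq_trA {K : Submodule ℂ (Fin n × Fin n → ℂ)}
    (hK : symmetricSubspace ℂ (Fin n) ≤ K)
    (h : ∀ v ∈ K, trB (vecMulVec v (star v)) = trA (vecMulVec v (star v))) :
    K ≤ symmetricSubspace ℂ (Fin n) := by
  intro v hv i j
  let one : Fin n × Fin n → ℂ := Function.uncurry (1 : Matrix (Fin n) (Fin n) ℂ)
  have hone : one ∈ K := hK fun p q => isSymm_one.apply q p
  have hsymm : (of (Function.curry v)).IsSymm :=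
    isSymm_of_forall_add_smul_one_mul_conjTranspose fun c => by
      have hc := h (v + c • one) (K.add_mem hv (K.smul_mem c hone))
      rwa [trB_vecMulVec_self_star, trA_vecMulVec_self_star] at hc
  exact hsymm.apply j i

lemma ker_le_symmetricSubspace_of_forall_QOT_eq_zero (hC : C.PosSemidef)
    (hsymm : symmetricSubspace ℂ (Fin n) ≤ LinearMap.ker C.mulVecLin)
    (h : ∀ ρ σ, IsDensityMatrix ρ → IsDensityMatrix σ → QOT C ρ σ = 0 → ρ = σ) :
    LinearMap.ker C.mulVecLin ≤ symmetricSubspace ℂ (Fin n) := by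
  refine le_symmetricSubspace_of_forall_trB_eq_trA hsymm fun v hv => ?_
  rcases eq_or_ne v 0 with rfl | hv0
  · rw [zero_vecMulVec]
    rfl
  obtain ⟨c, u, hu, hvu⟩ := exists_eq_smul_unit_vector hv0
  have hd := isDensityMatrix_vecMulVec_self_star hu
  have hA := isDensityMatrix_trB hd
  have hB := isDensityMatrix_trA hd
  have hCu : C *ᵥ u = 0 := by
    have hc : c ≠ 0 := left_ne_zero_of_smul (hvu ▸ hv0)
    rw [hvu] at hv
    exact (Submodule.smul_mem_iff _ hc).1 hv
  have hmarg : trB (vecMulVec u (star u)) = trA (vecMulVec u (star u)) :=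
    h _ _ hA hB <| (QOT_eq_zero_iff_exists_mul_eq_zero hC hA hB).2
      ⟨_, ⟨hd, rfl, rfl⟩, by rw [mul_vecMulVec, hCu, zero_vecMulVec]⟩
  simp only [hvu, star_smul, smul_vecMulVec, vecMulVec_smul, trB_smul, trA_smul, hmarg]

end Semimetric

/-- `T_C` is a semi-metric on density matrices iff `C` is positive
semidefinite and its kernel is exactly the symmetric subspace. -/
theorem qot_semimetric_iff (n : ℕ)
    (C : Matrix (Fin n × Fin n) (Fin n × Fin n) ℂ) (hC : C.IsHermitian) :
    (∀ ρ σ : Matrix (Fin n) (Fin n) ℂ, IsDensityMatrix ρ → IsDensityMatrix σ →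
        QOT C ρ σ = QOT C σ ρ ∧ 0 ≤ QOT C ρ σ ∧ (QOT C ρ σ = 0 ↔ ρ = σ)) ↔
      (C.PosSemidef ∧
        ∀ v : (Fin n × Fin n) → ℂ, C.mulVec v = 0 ↔ ∀ i j, v (i, j) = v (j, i)) := by
  constructor
  · intro h
    have hpos := posSemidef_of_forall_QOT_nonneg hC fun ρ σ hρ hσ => (h ρ σ hρ hσ).2.1
    have hsymm := symmetricSubspace_le_ker_of_forall_QOT_self_eq_zero hpos fun ρ hρ =>
      (h ρ ρ hρ hρ).2.2.2 rfl
    have hker := ker_le_symmetricSubspace_of_forall_QOT_eq_zero hpos hsymm fun ρ σ hρ hσ =>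
      (h ρ σ hρ hσ).2.2.1
    exact ⟨hpos, fun v => ⟨fun hv => hker hv, fun hv => hsymm hv⟩⟩
  · rintro ⟨hpos, hker⟩ ρ σ hρ hσ
    have hker' : LinearMap.ker C.mulVecLin = symmetricSubspace ℂ (Fin n) := Submodule.ext hker
    exact ⟨QOT_comm hC hker'.ge, QOT_nonneg hpos, QOT_eq_zero_iff_eq hpos hker' hρ hσ⟩
end

section
/- For all qubit density matrices ρA, ρB ∈ Ω_2, the quantum optimal transport cost with cost matrix C^Q is given by T_{C^Q}(ρA, ρB) = (1/2) · sup over unitary 2×2 complex matrices U of ( √(Re((Uᴴ * ρA * U) 0 0)) − √(Re((Uᴴ * ρB * U) 0 0)) )², where (·) 0 0 denotes the first diagonal entry (the supremum is attained by compactness of the unitary group). -/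
open Matrix ComplexOrder

/-- The SWAP matrix on `Fin n × Fin n`. -/
noncomputable def swapM (n : ℕ) : Matrix (Fin n × Fin n) (Fin n × Fin n) ℂ :=
  Matrix.of fun x y => if x.1 = y.2 ∧ x.2 = y.1 then 1 else 0

/-- The quantum cost matrix `C^Q = (1/2) (I - S)`. -/
noncomputable def CQ (n : ℕ) : Matrix (Fin n × Fin n) (Fin n × Fin n) ℂ :=
  (1 / 2 : ℂ) • (1 - swapM n)

/-- Kronecker product of square matrices indexed by `Fin m` and `Fin n`. -/
noncomputable def kron {m n : ℕ} (A : Matrix (Fin m) (Fin m) ℂ)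
    (B : Matrix (Fin n) (Fin n) ℂ) : Matrix (Fin m × Fin n) (Fin m × Fin n) ℂ :=
  Matrix.of fun x y => A x.1 y.1 * B x.2 y.2

/-!
The cost matrix commutes with `U ⊗ U`, so `QOT` is invariant under simultaneous conjugation of both
states by a unitary. A Cauchy–Schwarz estimate on the entries `R (i, j) (j, i)` of a coupling shows
that its cost is at least `(√(A i i) - √(B i i))² / 2`; by invariance this holds in every
orthonormal basis.

For the converse, choose a unit vector maximizing `|√⟨x, A x⟩ - √⟨x, B x⟩|` and rotate it to `e₀`.
Put `s = √A₀₀` and `t = √B₀₀`; when they are equal, `A = B` has a coupling of cost zero. Otherwise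
the first-order condition makes `(A₁₀, B₁₀)` proportional to `(s, t)`, say `(s c, t c)`, and
comparison with the vector `(conj c, -(s + t))` forces `s² + t² + |c|² ≤ 1`. This is exactly what
is needed for the coupling `v vᴴ + (1 - s² - t² - |c|²) e₁₁ e₁₁ᴴ`, with `v = s e₀₁ + t e₁₀ + c e₁₁`,
and its cost is `(s - t)² / 2`.
-/

open scoped Kronecker

section HermForm

variable {k : Type*} [Fintype k] {A B U : Matrix k k ℂ}

/-- The Hermitian form `⟨x, A x⟩`. Taking the real part makes it real-valued without a hypothesis on
`A`. -/
noncomputable def hermForm (A : Matrix k k ℂ) (x : k → ℂ) : ℝ :=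
  (star x ⬝ᵥ A *ᵥ x).re

/-- The quantity `√⟨x, A x⟩ - √⟨x, B x⟩`, which becomes a difference of roots of diagonal entries in
an orthonormal basis containing `x`. -/
noncomputable def sqrtGap (A B : Matrix k k ℂ) (x : k → ℂ) : ℝ :=
  √(hermForm A x) - √(hermForm B x)

/-- The unit vector `x` maximizes `|sqrtGap A B|` over the unit sphere, with the maximality stated
homogeneously for all vectors. -/
def IsOptimalDirection (A B : Matrix k k ℂ) (x : k → ℂ) : Prop :=
  ‖WithLp.toLp 2 x‖ = 1 ∧ ∀ y, |sqrtGap A B y| ≤ |sqrtGap A B x| * ‖WithLp.toLp 2 y‖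

theorem hermForm_nonneg (hA : A.PosSemidef) (x : k → ℂ) : 0 ≤ hermForm A x :=
  hA.re_dotProduct_nonneg x

theorem hermForm_add (A B : Matrix k k ℂ) (x : k → ℂ) :
    hermForm (A + B) x = hermForm A x + hermForm B x := by
  simp only [hermForm, add_mulVec, dotProduct_add, Complex.add_re]

theorem hermForm_sub (A B : Matrix k k ℂ) (x : k → ℂ) :
    hermForm (A - B) x = hermForm A x - hermForm B x := by
  simp only [hermForm, sub_mulVec, dotProduct_sub, Complex.sub_re]

theorem hermForm_smul (r : ℝ) (A : Matrix k k ℂ) (x : k → ℂ) :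
    hermForm (r • A) x = r * hermForm A x := by
  simp only [hermForm, smul_mulVec, dotProduct_smul, Complex.smul_re, smul_eq_mul]

theorem hermForm_smul_vec (A : Matrix k k ℂ) (r : ℝ) (x : k → ℂ) :
    hermForm A (r • x) = r ^ 2 * hermForm A x := by
  simp only [hermForm, star_smul, star_trivial, mulVec_smul, smul_dotProduct, dotProduct_smul,
    Complex.smul_re, smul_eq_mul]
  ring

theorem hermForm_zero_vec (A : Matrix k k ℂ) : hermForm A 0 = 0 := by
  simp only [hermForm, mulVec_zero, dotProduct_zero, Complex.zero_re]

theorem hermForm_neg_vec (A : Matrix k k ℂ) (x : k → ℂ) : hermForm A (-x) = hermForm A x := by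
  simp only [hermForm, star_neg, mulVec_neg, neg_dotProduct_neg]

theorem hermForm_one [DecidableEq k] (x : k → ℂ) : hermForm 1 x = ‖WithLp.toLp 2 x‖ ^ 2 := by
  simp [hermForm, EuclideanSpace.norm_sq_eq, dotProduct, ← Complex.normSq_eq_norm_sq,
    ← Complex.normSq_eq_conj_mul_self]

theorem hermForm_single [DecidableEq k] (A : Matrix k k ℂ) (i : k) :
    hermForm A (Pi.single i 1) = (A i i).re := by
  simp [hermForm]

theorem hermForm_single_sub_single [DecidableEq k] (A : Matrix k k ℂ) (i j : k) :
    hermForm A (Pi.single i 1 - Pi.single j 1) =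
      (A i i).re + (A j j).re - (A i j).re - (A j i).re := by
  simp [hermForm, mulVec_sub, sub_dotProduct, dotProduct_sub]
  ring

theorem hermForm_conj (A U : Matrix k k ℂ) (x : k → ℂ) :
    hermForm (Uᴴ * A * U) x = hermForm A (U *ᵥ x) := by
  simp only [hermForm, star_mulVec, ← mulVec_mulVec, dotProduct_mulVec]

theorem continuous_hermForm (A : Matrix k k ℂ) : Continuous (hermForm A) := by
  unfold hermForm
  fun_prop

theorem posSemidef_of_hermForm_nonneg (hA : A.IsHermitian) (h : ∀ x, 0 ≤ hermForm A x) :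
    A.PosSemidef :=
  .of_dotProduct_mulVec_nonneg hA fun x =>
    RCLike.nonneg_iff.2 ⟨h x, hA.im_star_dotProduct_mulVec_self x⟩

theorem mulVec_eq_zero_of_hermForm_eq_zero (hA : A.PosSemidef) {x : k → ℂ}
    (h : hermForm A x = 0) : A *ᵥ x = 0 :=
  (hA.dotProduct_mulVec_zero_iff x).1
    (Complex.ext h (hA.isHermitian.im_star_dotProduct_mulVec_self x))

open scoped MatrixOrder in
theorem eq_of_hermForm_eq (hA : A.IsHermitian) (hB : B.IsHermitian)
    (h : ∀ x, hermForm A x = hermForm B x) : A = B := by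
  refine le_antisymm (Matrix.le_iff.2 ?_) (Matrix.le_iff.2 ?_)
  · exact posSemidef_of_hermForm_nonneg (hB.sub hA) fun x => by rw [hermForm_sub, h, sub_self]
  · exact posSemidef_of_hermForm_nonneg (hA.sub hB) fun x => by rw [hermForm_sub, h, sub_self]

theorem norm_toLp_mulVec [DecidableEq k] (hU : Uᴴ * U = 1) (x : k → ℂ) :
    ‖WithLp.toLp 2 (U *ᵥ x)‖ = ‖WithLp.toLp 2 x‖ := by
  rw [← sq_eq_sq₀ (norm_nonneg _) (norm_nonneg _), ← hermForm_one, ← hermForm_one, ← hermForm_conj,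
    mul_one, hU]

theorem exists_unitary_mulVec_single [DecidableEq k] (i : k) {x : k → ℂ}
    (hx : ‖WithLp.toLp 2 x‖ = 1) :
    ∃ U : Matrix k k ℂ, Uᴴ * U = 1 ∧ U *ᵥ Pi.single i 1 = x := by
  obtain ⟨b, hb⟩ := Orthonormal.exists_orthonormalBasis_extension_of_card_eq
    (v := fun _ : k => WithLp.toLp 2 x) (s := {i}) (finrank_euclideanSpace (𝕜 := ℂ))
    ⟨fun _ => hx, fun _ _ h => (h (Subsingleton.elim _ _)).elim⟩
  refine ⟨(EuclideanSpace.basisFun k ℂ).toBasis.toMatrix b, mem_unitaryGroup_iff'.1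
    ((EuclideanSpace.basisFun k ℂ).toMatrix_orthonormalBasis_mem_unitary b), ?_⟩
  ext j
  simp [Module.Basis.toMatrix_apply, hb i rfl]

end HermForm

section SqrtGap

variable {k : Type*} [Fintype k] {A B U : Matrix k k ℂ} {x : k → ℂ}

theorem sqrtGap_smul (A B : Matrix k k ℂ) (r : ℝ) (x : k → ℂ) :
    sqrtGap A B (r • x) = |r| * sqrtGap A B x := by
  simp only [sqrtGap, hermForm_smul_vec, Real.sqrt_mul (sq_nonneg r), Real.sqrt_sq_eq_abs, mul_sub]

theorem sqrtGap_conj (A B U : Matrix k k ℂ) (x : k → ℂ) :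
    sqrtGap (Uᴴ * A * U) (Uᴴ * B * U) x = sqrtGap A B (U *ᵥ x) := by
  simp only [sqrtGap, hermForm_conj]

theorem sqrtGap_single [DecidableEq k] (A B : Matrix k k ℂ) (i : k) :
    sqrtGap A B (Pi.single i 1) = √(A i i).re - √(B i i).re := by
  simp only [sqrtGap, hermForm_single]

theorem neg_sqrtGap (A B : Matrix k k ℂ) (x : k → ℂ) : -sqrtGap A B x = sqrtGap B A x :=
  neg_sub _ _

theorem exists_isOptimalDirection [Nonempty k] (A B : Matrix k k ℂ) :
    ∃ x, IsOptimalDirection A B x := by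
  have hcont : Continuous fun x : EuclideanSpace ℂ k => |sqrtGap A B x.ofLp| := by
    have h (M : Matrix k k ℂ) : Continuous fun x : EuclideanSpace ℂ k => √(hermForm M x.ofLp) :=
      ((continuous_hermForm M).comp (PiLp.continuous_ofLp 2 _)).sqrt
    exact ((h A).sub (h B)).abs
  obtain ⟨x, hx, hmax⟩ := (isCompact_sphere (0 : EuclideanSpace ℂ k) 1).exists_isMaxOn
    (NormedSpace.sphere_nonempty.2 zero_le_one) hcont.continuousOn
  refine ⟨x.ofLp, mem_sphere_zero_iff_norm.1 hx, fun y => ?_⟩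
  rcases eq_or_ne y 0 with rfl | hy
  · simp [sqrtGap, hermForm]
  · have hn : ‖WithLp.toLp 2 y‖ ≠ 0 := by simpa using hy
    have hunit : ‖WithLp.toLp 2 y‖⁻¹ • WithLp.toLp 2 y ∈ Metric.sphere 0 1 := by
      rw [mem_sphere_zero_iff_norm, norm_smul, norm_inv, norm_norm, inv_mul_cancel₀ hn]
    have h : |sqrtGap A B (‖WithLp.toLp 2 y‖⁻¹ • y)| ≤ |sqrtGap A B x.ofLp| := hmax hunit
    rwa [sqrtGap_smul, abs_mul, abs_abs, abs_inv, abs_norm, inv_mul_le_iff₀ (by positivity),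
      mul_comm] at h

namespace IsOptimalDirection

theorem conj [DecidableEq k] (h : IsOptimalDirection A B (U *ᵥ x)) (hU : Uᴴ * U = 1) :
    IsOptimalDirection (Uᴴ * A * U) (Uᴴ * B * U) x := by
  refine ⟨(norm_toLp_mulVec hU x).symm.trans h.1, fun y => ?_⟩
  simpa only [sqrtGap_conj, norm_toLp_mulVec hU] using h.2 (U *ᵥ y)

theorem symm (h : IsOptimalDirection A B x) : IsOptimalDirection B A x :=
  ⟨h.1, fun y => by simpa only [← neg_sqrtGap A B, abs_neg] using h.2 y⟩

theorem sq_sqrtGap_mulVec_le [DecidableEq k] (h : IsOptimalDirection A B x) (hU : Uᴴ * U = 1)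
    {y : k → ℂ} (hy : ‖WithLp.toLp 2 y‖ = 1) :
    sqrtGap A B (U *ᵥ y) ^ 2 ≤ sqrtGap A B x ^ 2 :=
  sq_le_sq.2 (by simpa only [norm_toLp_mulVec hU, hy, mul_one] using h.2 (U *ᵥ y))

theorem eq_of_sqrtGap_eq_zero (h : IsOptimalDirection A B x) (hA : A.PosSemidef)
    (hB : B.PosSemidef) (h0 : sqrtGap A B x = 0) : A = B := by
  refine eq_of_hermForm_eq hA.isHermitian hB.isHermitian fun y => ?_
  have hy : sqrtGap A B y = 0 := by simpa [h0] using h.2 y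
  exact (Real.sqrt_inj (hermForm_nonneg hA y) (hermForm_nonneg hB y)).1 (sub_eq_zero.1 hy)

end IsOptimalDirection

theorem mul_sq_le_of_le_add {a b n s t : ℝ} (ha : 0 ≤ a) (ht : 0 ≤ t) (hts : t ≤ s)
    (h : a ≤ b + (s - t) * n) : t * a ^ 2 ≤ s * b ^ 2 + s * t * (s - t) * n ^ 2 := by
  have hsq : t * a ^ 2 ≤ t * (b + (s - t) * n) ^ 2 := by gcongr
  have hpos : 0 ≤ (s - t) * (b - t * n) ^ 2 := mul_nonneg (sub_nonneg.2 hts) (sq_nonneg _)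
  linear_combination hsq + hpos

/-- This is the first-order condition `A x / s - B x / t = (s - t) x`, cleared of denominators so
that `t = 0` is covered. -/
theorem IsOptimalDirection.smul_mulVec_eq {s t : ℝ}
    (h : IsOptimalDirection A B x) (hA : A.PosSemidef) (hB : B.PosSemidef)
    (hs : √(hermForm A x) = s) (ht : √(hermForm B x) = t) (hts : t ≤ s) :
    t • A *ᵥ x = s • B *ᵥ x + (s * t * (s - t)) • x := by
  classical
  have ht0 : 0 ≤ t := ht ▸ Real.sqrt_nonneg _
  have hform (y : k → ℂ) : hermForm (s • B + (s * t * (s - t)) • 1 - t • A) y =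
      s * √(hermForm B y) ^ 2 + s * t * (s - t) * ‖WithLp.toLp 2 y‖ ^ 2 -
        t * √(hermForm A y) ^ 2 := by
    rw [hermForm_sub, hermForm_add, hermForm_smul, hermForm_smul, hermForm_smul, hermForm_one,
      Real.sq_sqrt (hermForm_nonneg hA y), Real.sq_sqrt (hermForm_nonneg hB y)]
  have hherm : (s • B + (s * t * (s - t)) • (1 : Matrix k k ℂ) - t • A).IsHermitian := by
    have hsmul (r : ℝ) {M : Matrix k k ℂ} (hM : M.IsHermitian) : (r • M).IsHermitian :=
      hM.smul (IsSelfAdjoint.all r)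
    exact ((hsmul s hB.isHermitian).add (hsmul _ isHermitian_one)).sub (hsmul t hA.isHermitian)
  have hpos : (s • B + (s * t * (s - t)) • (1 : Matrix k k ℂ) - t • A).PosSemidef := by
    refine posSemidef_of_hermForm_nonneg hherm fun y => ?_
    have hy := (le_abs_self _).trans (h.2 y)
    simp only [sqrtGap, hs, ht, abs_of_nonneg (sub_nonneg.2 hts)] at hy
    rw [hform, sub_nonneg]
    exact mul_sq_le_of_le_add (Real.sqrt_nonneg _) ht0 hts (sub_le_iff_le_add'.1 hy)
  have hker := mulVec_eq_zero_of_hermForm_eq_zero hpos (x := x) (by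
    rw [hform, hs, ht, h.1]; ring)
  rw [sub_mulVec, add_mulVec, smul_mulVec, smul_mulVec, smul_mulVec, one_mulVec,
    sub_eq_zero] at hker
  exact hker.symm

end SqrtGap

section Coupling

variable {m n : ℕ}

theorem trace_trB_mul (R : Matrix (Fin m × Fin n) (Fin m × Fin n) ℂ)
    (X : Matrix (Fin m) (Fin m) ℂ) :
    (trB R * X).trace = (R * X ⊗ₖ (1 : Matrix (Fin n) (Fin n) ℂ)).trace := by
  simp only [trace, diag_apply, mul_apply, trB, of_apply, Fintype.sum_prod_type, kronecker_apply,
    one_apply, mul_ite, mul_one, mul_zero, Finset.sum_ite_eq', Finset.mem_univ, if_true,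
    Finset.sum_mul]
  exact Finset.sum_congr rfl fun _ _ => Finset.sum_comm

theorem trace_trA_mul (R : Matrix (Fin m × Fin n) (Fin m × Fin n) ℂ)
    (X : Matrix (Fin n) (Fin n) ℂ) :
    (trA R * X).trace = (R * (1 : Matrix (Fin m) (Fin m) ℂ) ⊗ₖ X).trace := by
  simp only [trace, diag_apply, mul_apply, trA, of_apply, Fintype.sum_prod_type, kronecker_apply,
    one_apply, ite_mul, one_mul, zero_mul, mul_ite, mul_zero, Finset.sum_ite_irrel,
    Finset.sum_const_zero, Finset.sum_ite_eq', Finset.mem_univ, if_true, Finset.sum_mul]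
  exact (Finset.sum_congr rfl fun _ _ => Finset.sum_comm).trans Finset.sum_comm

theorem trB_conj_kronecker (R : Matrix (Fin m × Fin n) (Fin m × Fin n) ℂ)
    (U : Matrix (Fin m) (Fin m) ℂ) {V : Matrix (Fin n) (Fin n) ℂ} (hV : Vᴴ * V = 1) :
    trB ((U ⊗ₖ V)ᴴ * R * (U ⊗ₖ V)) = Uᴴ * trB R * U := by
  refine ext_iff_trace_mul_right.2 fun X => ?_
  calc (trB ((U ⊗ₖ V)ᴴ * R * (U ⊗ₖ V)) * X).trace
      = (R * ((U ⊗ₖ V) * X ⊗ₖ 1 * (U ⊗ₖ V)ᴴ)).trace := by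
        rw [trace_trB_mul, mul_assoc, mul_assoc, trace_mul_comm, mul_assoc]
    _ = (R * (U * X * Uᴴ) ⊗ₖ (1 : Matrix (Fin n) (Fin n) ℂ)).trace := by
        rw [conjTranspose_kronecker, ← mul_kronecker_mul, ← mul_kronecker_mul, mul_one,
          mul_eq_one_comm.1 hV]
    _ = (Uᴴ * trB R * U * X).trace := by
        rw [← trace_trB_mul, ← mul_assoc, trace_mul_comm]
        simp only [mul_assoc]

theorem trA_conj_kronecker (R : Matrix (Fin m × Fin n) (Fin m × Fin n) ℂ)
    {U : Matrix (Fin m) (Fin m) ℂ} (V : Matrix (Fin n) (Fin n) ℂ) (hU : Uᴴ * U = 1) :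
    trA ((U ⊗ₖ V)ᴴ * R * (U ⊗ₖ V)) = Vᴴ * trA R * V := by
  refine ext_iff_trace_mul_right.2 fun X => ?_
  calc (trA ((U ⊗ₖ V)ᴴ * R * (U ⊗ₖ V)) * X).trace
      = (R * ((U ⊗ₖ V) * 1 ⊗ₖ X * (U ⊗ₖ V)ᴴ)).trace := by
        rw [trace_trA_mul, mul_assoc, mul_assoc, trace_mul_comm, mul_assoc]
    _ = (R * (1 : Matrix (Fin m) (Fin m) ℂ) ⊗ₖ (V * X * Vᴴ)).trace := by
        rw [conjTranspose_kronecker, ← mul_kronecker_mul, ← mul_kronecker_mul, mul_one,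
          mul_eq_one_comm.1 hU]
    _ = (Vᴴ * trA R * V * X).trace := by
        rw [← trace_trA_mul, ← mul_assoc, trace_mul_comm]
        simp only [mul_assoc]

theorem conjTranspose_kronecker_mul_self {U : Matrix (Fin m) (Fin m) ℂ}
    {V : Matrix (Fin n) (Fin n) ℂ} (hU : Uᴴ * U = 1) (hV : Vᴴ * V = 1) :
    (U ⊗ₖ V)ᴴ * (U ⊗ₖ V) = 1 := by
  rw [conjTranspose_kronecker, ← mul_kronecker_mul, hU, hV, one_kronecker_one]

theorem conj_conjTranspose_conj {k : Type*} [Fintype k] [DecidableEq k] {U : Matrix k k ℂ}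
    (hU : Uᴴ * U = 1) (M : Matrix k k ℂ) : Uᴴᴴ * (Uᴴ * M * U) * Uᴴ = M := by
  have hU' : U * Uᴴ = 1 := mul_eq_one_comm.1 hU
  rw [conjTranspose_conjTranspose, ← mul_assoc, ← mul_assoc, hU', one_mul, mul_assoc, hU',
    mul_one]

theorem conjTranspose_conjTranspose_mul_self {k : Type*} [Fintype k] [DecidableEq k]
    {U : Matrix k k ℂ} (hU : Uᴴ * U = 1) : Uᴴᴴ * Uᴴ = 1 := by
  rw [conjTranspose_conjTranspose, mul_eq_one_comm.1 hU]

theorem IsDensityMatrix.conj {k : Type*} [Fintype k] [DecidableEq k] {ρ U : Matrix k k ℂ}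
    (hρ : IsDensityMatrix ρ) (hU : Uᴴ * U = 1) : IsDensityMatrix (Uᴴ * ρ * U) := by
  refine ⟨hρ.1.conjTranspose_mul_mul_same U, ?_⟩
  rw [trace_mul_cycle, mul_eq_one_comm.1 hU, one_mul, hρ.2]

theorem conj_kronecker_mem_QCouplings {A U : Matrix (Fin m) (Fin m) ℂ}
    {B V : Matrix (Fin n) (Fin n) ℂ} {R : Matrix (Fin m × Fin n) (Fin m × Fin n) ℂ}
    (hR : R ∈ QCouplings A B) (hU : Uᴴ * U = 1) (hV : Vᴴ * V = 1) :
    (U ⊗ₖ V)ᴴ * R * (U ⊗ₖ V) ∈ QCouplings (Uᴴ * A * U) (Vᴴ * B * V) := by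
  obtain ⟨hdens, rfl, rfl⟩ := hR
  exact ⟨hdens.conj (conjTranspose_kronecker_mul_self hU hV), trB_conj_kronecker R U hV,
    trA_conj_kronecker R V hU⟩

end Coupling

section SwapCost

variable {n : ℕ}

theorem swapM_mul (M : Matrix (Fin n × Fin n) (Fin n × Fin n) ℂ) :
    swapM n * M = M.submatrix Prod.swap id := by
  ext ⟨i, p⟩ y
  simp [swapM, mul_apply, Fintype.sum_prod_type, ite_and]

theorem mul_swapM (M : Matrix (Fin n × Fin n) (Fin n × Fin n) ℂ) :
    M * swapM n = M.submatrix id Prod.swap := by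
  ext x ⟨j, q⟩
  simp [swapM, mul_apply, Fintype.sum_prod_type, ite_and, Finset.sum_ite_irrel]

theorem commute_CQ_kronecker (U : Matrix (Fin n) (Fin n) ℂ) : Commute (CQ n) (U ⊗ₖ U) := by
  have hswap : Commute (swapM n) (U ⊗ₖ U) := by
    rw [commute_iff_eq, swapM_mul, mul_swapM]
    ext x y
    exact mul_comm _ _
  exact ((Commute.one_left _).sub_left hswap).smul_left _

theorem trace_CQ_mul (R : Matrix (Fin n × Fin n) (Fin n × Fin n) ℂ) :
    (CQ n * R).trace = 1 / 2 * ∑ i, ∑ j, (R (i, j) (i, j) - R (j, i) (i, j)) := by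
  rw [CQ, smul_mul, trace_smul, sub_mul, one_mul, swapM_mul, smul_eq_mul, trace_sub]
  simp only [trace, diag_apply, submatrix_apply, id, Fintype.sum_prod_type, Prod.swap_prod_mk,
    Finset.sum_sub_distrib]

/-- `CQ n` is a quarter of the sum of the rank-one matrices of the vectors `e_ij - e_ji`. -/
theorem re_trace_CQ_mul (R : Matrix (Fin n × Fin n) (Fin n × Fin n) ℂ) :
    (CQ n * R).trace.re =
      1 / 4 * ∑ i, ∑ j, hermForm R (Pi.single (i, j) 1 - Pi.single (j, i) 1) := by
  have hre : (CQ n * R).trace.re =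
      1 / 2 * (∑ i, ∑ j, (R (i, j) (i, j)).re - ∑ i, ∑ j, (R (j, i) (i, j)).re) := by
    rw [trace_CQ_mul, show (1 / 2 : ℂ) = ((1 / 2 : ℝ) : ℂ) by norm_num, Complex.re_ofReal_mul]
    simp only [Complex.re_sum, Complex.sub_re, Finset.sum_sub_distrib]
  simp only [hermForm_single_sub_single, Finset.sum_sub_distrib, Finset.sum_add_distrib]
  rw [hre, Finset.sum_comm (f := fun i j => (R (j, i) (j, i)).re),
    Finset.sum_comm (f := fun i j => (R (i, j) (j, i)).re)]
  ring

theorem trace_CQ_mul_conj_kronecker (R : Matrix (Fin n × Fin n) (Fin n × Fin n) ℂ)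
    {U : Matrix (Fin n) (Fin n) ℂ} (hU : Uᴴ * U = 1) :
    (CQ n * ((U ⊗ₖ U)ᴴ * R * (U ⊗ₖ U))).trace = (CQ n * R).trace := by
  have hW := mul_eq_one_comm.1 (conjTranspose_kronecker_mul_self hU hU)
  rw [← mul_assoc, trace_mul_comm, ← mul_assoc, ← mul_assoc, ← (commute_CQ_kronecker U).eq,
    mul_assoc (CQ n), hW, mul_one]

theorem QOT_CQ_conj (A B : Matrix (Fin n) (Fin n) ℂ) {U : Matrix (Fin n) (Fin n) ℂ}
    (hU : Uᴴ * U = 1) : QOT (CQ n) (Uᴴ * A * U) (Uᴴ * B * U) = QOT (CQ n) A B := by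
  have hsub (A B : Matrix (Fin n) (Fin n) ℂ) {U : Matrix (Fin n) (Fin n) ℂ} (hU : Uᴴ * U = 1) :
      (fun R => ((CQ n * R).trace).re) '' QCouplings A B ⊆
        (fun R => ((CQ n * R).trace).re) '' QCouplings (Uᴴ * A * U) (Uᴴ * B * U) := by
    rintro _ ⟨R, hR, rfl⟩
    exact ⟨_, conj_kronecker_mem_QCouplings hR hU hU,
      congrArg Complex.re (trace_CQ_mul_conj_kronecker R hU)⟩
  refine congrArg sInf (Set.Subset.antisymm ?_ (hsub A B hU))
  simpa only [conj_conjTranspose_conj hU] using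
    hsub (Uᴴ * A * U) (Uᴴ * B * U) (conjTranspose_conjTranspose_mul_self hU)

end SwapCost

section LowerBound

variable {n : ℕ}

theorem norm_apply_le_sqrt_mul_sqrt {k : Type*} {M : Matrix k k ℂ}
    (hM : M.PosSemidef) (i j : k) : ‖M i j‖ ≤ √(M i i).re * √(M j j).re := by
  have hdet := (Complex.nonneg_iff.1 (hM.submatrix ![i, j]).det_nonneg).1
  have hreal (l : k) : M l l = ((M l l).re : ℂ) := (hM.isHermitian.coe_re_apply_self l).symm
  simp only [det_fin_two, submatrix_apply, cons_val_zero, cons_val_one] at hdet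
  rw [← hM.isHermitian.apply j i, hreal i, hreal j, Complex.star_def, Complex.mul_conj,
    ← Complex.ofReal_mul, ← Complex.ofReal_sub, Complex.ofReal_re, sub_nonneg,
    Complex.normSq_eq_norm_sq] at hdet
  rw [← Real.sqrt_mul (Complex.nonneg_iff.1 hM.diag_nonneg).1]
  exact Real.le_sqrt_of_sq_le hdet

theorem two_mul_sum_row_le_sum_sum {ι : Type*} [Fintype ι] {f : ι → ι → ℝ}
    (hpos : ∀ i j, 0 ≤ f i j) (hsymm : ∀ i j, f i j = f j i) (hdiag : ∀ i, f i i = 0) (i : ι) :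
    2 * ∑ j, f i j ≤ ∑ l, ∑ j, f l j := by
  classical
  have hcol : ∑ l ∈ Finset.univ.erase i, f l i = ∑ j, f i j := by
    rw [Finset.sum_erase (f := fun l => f l i) _ (hdiag i)]
    exact Finset.sum_congr rfl fun l _ => hsymm l i
  calc 2 * ∑ j, f i j = ∑ j, f i j + ∑ l ∈ Finset.univ.erase i, f l i := by rw [hcol, two_mul]
    _ ≤ ∑ j, f i j + ∑ l ∈ Finset.univ.erase i, ∑ j, f l j := by
        gcongr with l
        exact Finset.single_le_sum (fun j _ => hpos l j) (Finset.mem_univ i)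
    _ = ∑ l, ∑ j, f l j := Finset.add_sum_erase _ (fun l => ∑ j, f l j) (Finset.mem_univ i)

theorem sq_sqrt_sub_sqrt_le_sum_hermForm {A B : Matrix (Fin n) (Fin n) ℂ}
    {R : Matrix (Fin n × Fin n) (Fin n × Fin n) ℂ} (hR : R ∈ QCouplings A B) (i : Fin n) :
    (√(A i i).re - √(B i i).re) ^ 2 ≤
      ∑ j, hermForm R (Pi.single (i, j) 1 - Pi.single (j, i) 1) := by
  obtain ⟨⟨hpos, -⟩, rfl, rfl⟩ := hR
  have hdiag (x : Fin n × Fin n) : 0 ≤ (R x x).re := (Complex.nonneg_iff.1 hpos.diag_nonneg).1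
  have hA : (trB R i i).re = ∑ j, (R (i, j) (i, j)).re := by
    simp only [trB, of_apply, Complex.re_sum]
  have hB : (trA R i i).re = ∑ j, (R (j, i) (j, i)).re := by
    simp only [trA, of_apply, Complex.re_sum]
  have hcross (x y : Fin n → Fin n × Fin n) :
      ∑ j, (R (x j) (y j)).re ≤ √(∑ j, (R (x j) (x j)).re) * √(∑ j, (R (y j) (y j)).re) :=
    (Finset.sum_le_sum fun j _ => (Complex.re_le_norm _).trans
      (norm_apply_le_sqrt_mul_sqrt hpos (x j) (y j))).trans
      (Real.sum_sqrt_mul_sqrt_le _ (fun j => hdiag (x j)) fun j => hdiag (y j))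
  have h₁ := hcross (fun j => (i, j)) fun j => (j, i)
  have h₂ := hcross (fun j => (j, i)) fun j => (i, j)
  simp only [hermForm_single_sub_single, Finset.sum_sub_distrib, Finset.sum_add_distrib]
  rw [sub_sq, Real.sq_sqrt (hA ▸ Finset.sum_nonneg fun j _ => hdiag (i, j)),
    Real.sq_sqrt (hB ▸ Finset.sum_nonneg fun j _ => hdiag (j, i)), hA, hB]
  linarith

theorem half_sq_sqrt_sub_sqrt_le_cost {A B : Matrix (Fin n) (Fin n) ℂ}
    {R : Matrix (Fin n × Fin n) (Fin n × Fin n) ℂ} (hR : R ∈ QCouplings A B) (i : Fin n) :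
    1 / 2 * (√(A i i).re - √(B i i).re) ^ 2 ≤ (CQ n * R).trace.re := by
  have hrow := sq_sqrt_sub_sqrt_le_sum_hermForm hR i
  have hsum := two_mul_sum_row_le_sum_sum
    (f := fun i j => hermForm R (Pi.single (i, j) 1 - Pi.single (j, i) 1))
    (fun _ _ => hermForm_nonneg hR.1.1 _)
    (fun _ _ => by rw [← neg_sub, hermForm_neg_vec])
    (fun _ => by rw [sub_self, hermForm_zero_vec]) i
  rw [re_trace_CQ_mul]
  linarith

end LowerBound

section SelfCoupling

variable {n : ℕ}

theorem diagonal_mem_QCouplings_self {d : Fin n → ℂ} (hd : IsDensityMatrix (diagonal d)) :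
    diagonal (fun x : Fin n × Fin n => if x.1 = x.2 then d x.1 else 0) ∈
      QCouplings (diagonal d) (diagonal d) := by
  refine ⟨⟨PosSemidef.diagonal fun x => ?_, ?_⟩, ?_, ?_⟩
  · change (0 : ℂ) ≤ if x.1 = x.2 then d x.1 else 0
    split_ifs
    exacts [posSemidef_diagonal_iff.1 hd.1 x.1, le_rfl]
  · rw [← hd.2]
    simp [trace, Fintype.sum_prod_type]
  · ext i j
    simp [trB, diagonal_apply]
  · ext i j
    simp [trA, diagonal_apply]

theorem exists_mem_QCouplings_self_cost_eq_zero {ρ : Matrix (Fin n) (Fin n) ℂ}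
    (hρ : IsDensityMatrix ρ) : ∃ R ∈ QCouplings ρ ρ, (CQ n * R).trace = 0 := by
  obtain ⟨U, d, hU, hd⟩ : ∃ (U : Matrix (Fin n) (Fin n) ℂ) (d : Fin n → ℂ),
      Uᴴ * U = 1 ∧ Uᴴ * ρ * U = diagonal d := by
    refine ⟨hρ.1.isHermitian.eigenvectorUnitary, RCLike.ofReal ∘ hρ.1.isHermitian.eigenvalues,
      Unitary.coe_star_mul_self _, ?_⟩
    exact (Unitary.conjStarAlgAut_star_apply ..).symm.trans
      hρ.1.isHermitian.conjStarAlgAut_star_eigenvectorUnitary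
  have hU' := conjTranspose_conjTranspose_mul_self hU
  have hmem := conj_kronecker_mem_QCouplings
    (diagonal_mem_QCouplings_self (hd ▸ hρ.conj hU)) hU' hU'
  rw [← hd, conj_conjTranspose_conj hU] at hmem
  refine ⟨_, hmem, ?_⟩
  rw [trace_CQ_mul_conj_kronecker _ hU', trace_CQ_mul]
  refine mul_eq_zero_of_right _ (Finset.sum_eq_zero fun i _ => Finset.sum_eq_zero fun j _ => ?_)
  rcases eq_or_ne i j with rfl | hij
  · exact sub_self _
  · simp [hij, hij.symm]

end SelfCoupling

section Qubit

/-- The qubit matrix with first diagonal entry `s²`, trace one and lower off-diagonal entry `s c`.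
Factoring `s` out of the off-diagonal entry is what lets an optimal pair share one `c`. -/
noncomputable def qubit (s : ℝ) (c : ℂ) : Matrix (Fin 2) (Fin 2) ℂ :=
  !![(s : ℂ) ^ 2, s * star c; s * c, 1 - (s : ℂ) ^ 2]

theorem IsDensityMatrix.eq_qubit {ρ : Matrix (Fin 2) (Fin 2) ℂ} (hρ : IsDensityMatrix ρ) {c : ℂ}
    (hc : ρ 1 0 = √(ρ 0 0).re * c) : ρ = qubit √(ρ 0 0).re c := by
  have h00 : ρ 0 0 = (√(ρ 0 0).re : ℂ) ^ 2 := by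
    rw [← Complex.ofReal_pow, Real.sq_sqrt (Complex.nonneg_iff.1 hρ.1.diag_nonneg).1]
    exact (hρ.1.isHermitian.coe_re_apply_self 0).symm
  have h11 : ρ 1 1 = 1 - (√(ρ 0 0).re : ℂ) ^ 2 := by
    rw [← h00, ← hρ.2, trace_fin_two, add_sub_cancel_left]
  have h01 : ρ 0 1 = √(ρ 0 0).re * star c := by
    rw [← hρ.1.isHermitian.apply 0 1, hc, star_mul', Complex.star_def, Complex.conj_ofReal]
  ext i j
  fin_cases i <;> fin_cases j
  exacts [h00, h01, hc, h11]

theorem hermForm_qubit (s t : ℝ) (c : ℂ) :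
    hermForm (qubit s c) ![star c, -(s + t)] =
      t ^ 2 * (‖c‖ ^ 2 + (s + t) ^ 2) + (1 - s ^ 2 - t ^ 2 - ‖c‖ ^ 2) * (s + t) ^ 2 := by
  simp [hermForm, qubit, dotProduct, mulVec, Fin.sum_univ_two, ← Complex.normSq_eq_norm_sq,
    Complex.normSq_apply, ← Complex.ofReal_pow]
  ring

theorem sub_mul_lt_sub_of_sq_eq {a b n s t δ : ℝ} (ha : 0 ≤ a) (hb : 0 ≤ b) (hn : 0 ≤ n)
    (ht : 0 ≤ t) (hts : t < s) (hδ : 0 < δ) (ha2 : a ^ 2 = t ^ 2 * n ^ 2 - δ)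
    (hb2 : b ^ 2 = s ^ 2 * n ^ 2 - δ) : (s - t) * n < b - a := by
  have han : a ≤ t * n :=
    le_of_sq_le_sq (by rw [mul_pow]; linarith) (mul_nonneg ht hn)
  have hbn : b < s * n :=
    lt_of_pow_lt_pow_left₀ 2 (mul_nonneg (ht.trans hts.le) hn) (by rw [mul_pow]; linarith)
  have hnpos : 0 < n := pos_of_mul_pos_right (hb.trans_lt hbn) (ht.trans hts.le)
  by_contra! h
  have hlt : (b - a) * (a + b) < (b - a) * (a + b) :=
    calc (b - a) * (a + b) ≤ (s - t) * n * (a + b) := by gcongr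
      _ < (s - t) * n * (t * n + s * n) :=
        mul_lt_mul_of_pos_left (add_lt_add_of_le_of_lt han hbn) (mul_pos (sub_pos.2 hts) hnpos)
      _ = (b - a) * (a + b) := by linear_combination ha2 - hb2
  exact hlt.false

theorem IsOptimalDirection.sq_add_sq_add_norm_sq_le_one {s t : ℝ} {c : ℂ} (ht : 0 ≤ t)
    (hts : t < s) (hA : (qubit s c).PosSemidef) (hB : (qubit t c).PosSemidef)
    (h : IsOptimalDirection (qubit s c) (qubit t c) (Pi.single 0 1)) :
    s ^ 2 + t ^ 2 + ‖c‖ ^ 2 ≤ 1 := by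
  by_contra! hlt
  have hst : 0 < s + t := by linarith
  have hgap : sqrtGap (qubit s c) (qubit t c) (Pi.single 0 1) = s - t := by
    have hre (r : ℝ) : (qubit r c 0 0).re = r ^ 2 := by simp [qubit, ← Complex.ofReal_pow]
    rw [sqrtGap_single, hre, hre, Real.sqrt_sq (ht.trans hts.le), Real.sqrt_sq ht]
  set y : Fin 2 → ℂ := ![star c, -(s + t)] with hy
  have hnorm : ‖WithLp.toLp 2 y‖ ^ 2 = ‖c‖ ^ 2 + (s + t) ^ 2 := by
    have hst_norm : ‖(s + t : ℂ)‖ = s + t := by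
      rw [← Complex.ofReal_add, Complex.norm_of_nonneg hst.le]
    rw [EuclideanSpace.norm_sq_eq, Fin.sum_univ_two]
    simp [hy, -neg_add_rev, hst_norm]
  have hAy : √(hermForm (qubit s c) y) ^ 2 = t ^ 2 * ‖WithLp.toLp 2 y‖ ^ 2 -
      (s ^ 2 + t ^ 2 + ‖c‖ ^ 2 - 1) * (s + t) ^ 2 := by
    rw [Real.sq_sqrt (hermForm_nonneg hA y), hy, hermForm_qubit, ← hy, hnorm]
    ring
  have hBy : √(hermForm (qubit t c) y) ^ 2 = s ^ 2 * ‖WithLp.toLp 2 y‖ ^ 2 -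
      (s ^ 2 + t ^ 2 + ‖c‖ ^ 2 - 1) * (s + t) ^ 2 := by
    rw [Real.sq_sqrt (hermForm_nonneg hB y), hy, add_comm (s : ℂ), hermForm_qubit, add_comm (t : ℂ),
      ← hy, hnorm]
    ring
  have hgt := sub_mul_lt_sub_of_sq_eq (Real.sqrt_nonneg _) (Real.sqrt_nonneg _) (norm_nonneg _)
    ht hts (mul_pos (sub_pos.2 hlt) (pow_pos hst 2)) hAy hBy
  have hmax := (neg_abs_le _).trans' (neg_le_neg (h.2 y))
  rw [hgap, abs_of_pos (sub_pos.2 hts), sqrtGap] at hmax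
  linarith

theorem exists_eq_qubit_of_isOptimalDirection {A B : Matrix (Fin 2) (Fin 2) ℂ}
    (hA : IsDensityMatrix A) (hB : IsDensityMatrix B)
    (h : IsOptimalDirection A B (Pi.single 0 1)) (hlt : √(B 0 0).re < √(A 0 0).re) :
    ∃ c, A = qubit √(A 0 0).re c ∧ B = qubit √(B 0 0).re c ∧
      √(A 0 0).re ^ 2 + √(B 0 0).re ^ 2 + ‖c‖ ^ 2 ≤ 1 := by
  have hs : (√(A 0 0).re : ℂ) ≠ 0 :=
    Complex.ofReal_ne_zero.2 ((Real.sqrt_nonneg _).trans_lt hlt).ne'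
  have hstat := congrFun (h.smul_mulVec_eq hA.1 hB.1 (by rw [hermForm_single])
    (by rw [hermForm_single]) hlt.le) 1
  have hoff : √(B 0 0).re * A 1 0 = √(A 0 0).re * B 1 0 := by simpa using hstat
  obtain ⟨hAq, hBq⟩ : A = qubit √(A 0 0).re (A 1 0 / √(A 0 0).re) ∧
      B = qubit √(B 0 0).re (A 1 0 / √(A 0 0).re) := by
    refine ⟨hA.eq_qubit ?_, hB.eq_qubit ?_⟩
    · exact (mul_div_cancel₀ _ hs).symm
    · rw [mul_div_assoc', hoff, mul_div_cancel_left₀ _ hs]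
  exact ⟨_, hAq, hBq, IsOptimalDirection.sq_add_sq_add_norm_sq_le_one (Real.sqrt_nonneg _) hlt
    (hAq ▸ hA.1) (hBq ▸ hB.1) (hAq ▸ hBq ▸ h)⟩

/-- A coupling of `qubit s c` and `qubit t c`: the pure state `s e₀₁ + t e₁₀ + c e₁₁`, topped up
with `e₁₁` to trace one. -/
noncomputable def qubitCoupling (s t : ℝ) (c : ℂ) : Matrix (Fin 2 × Fin 2) (Fin 2 × Fin 2) ℂ :=
  let v : Fin 2 × Fin 2 → ℂ := fun x => !![0, (s : ℂ); (t : ℂ), c] x.1 x.2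
  vecMulVec v (star v) + (1 - s ^ 2 - t ^ 2 - ‖c‖ ^ 2) • single (1, 1) (1, 1) 1

theorem qubitCoupling_posSemidef {s t : ℝ} {c : ℂ} (h : s ^ 2 + t ^ 2 + ‖c‖ ^ 2 ≤ 1) :
    (qubitCoupling s t c).PosSemidef := by
  have hsingle :
      (single (1, 1) (1, 1) 1 : Matrix (Fin 2 × Fin 2) (Fin 2 × Fin 2) ℂ).PosSemidef := by
    simpa [single_eq_single_vecMulVec_single] using
      posSemidef_vecMulVec_self_star (Pi.single ((1, 1) : Fin 2 × Fin 2) (1 : ℂ))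
  exact (posSemidef_vecMulVec_self_star _).add (hsingle.smul (by linarith))

theorem trB_qubitCoupling (s t : ℝ) (c : ℂ) : trB (qubitCoupling s t c) = qubit s c := by
  ext i j
  fin_cases i <;> fin_cases j <;>
    simp [trB, qubitCoupling, qubit, vecMulVec_apply, Complex.mul_conj'] <;>
    ring

theorem trA_qubitCoupling (s t : ℝ) (c : ℂ) : trA (qubitCoupling s t c) = qubit t c := by
  ext i j
  fin_cases i <;> fin_cases j <;>
    simp [trA, qubitCoupling, qubit, vecMulVec_apply, Complex.mul_conj'] <;>
    ring

theorem qubitCoupling_mem_QCouplings {s t : ℝ} {c : ℂ} (h : s ^ 2 + t ^ 2 + ‖c‖ ^ 2 ≤ 1) :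
    qubitCoupling s t c ∈ QCouplings (qubit s c) (qubit t c) := by
  have htrace : (qubitCoupling s t c).trace = 1 := by
    have htrB := trace_trB_mul (qubitCoupling s t c) 1
    rw [one_kronecker_one, mul_one, mul_one, trB_qubitCoupling] at htrB
    rw [← htrB, qubit, trace_fin_two_of, add_sub_cancel]
  exact ⟨⟨qubitCoupling_posSemidef h, htrace⟩, trB_qubitCoupling s t c, trA_qubitCoupling s t c⟩

theorem trace_CQ_mul_qubitCoupling (s t : ℝ) (c : ℂ) :
    (CQ 2 * qubitCoupling s t c).trace.re = 1 / 2 * (s - t) ^ 2 := by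
  have htrace : (CQ 2 * qubitCoupling s t c).trace = ((1 / 2 * (s - t) ^ 2 : ℝ) : ℂ) := by
    simp [trace_CQ_mul, qubitCoupling, vecMulVec_apply]
    ring
  rw [htrace, Complex.ofReal_re]

theorem IsOptimalDirection.exists_coupling {A B : Matrix (Fin 2) (Fin 2) ℂ}
    (h : IsOptimalDirection A B (Pi.single 0 1)) (hA : IsDensityMatrix A)
    (hB : IsDensityMatrix B) :
    ∃ R ∈ QCouplings A B, (CQ 2 * R).trace.re = 1 / 2 * (√(A 0 0).re - √(B 0 0).re) ^ 2 := by
  rcases lt_trichotomy √(A 0 0).re √(B 0 0).re with hlt | heq | hgt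
  · obtain ⟨c, hBq, hAq, hc⟩ := exists_eq_qubit_of_isOptimalDirection hB hA h.symm hlt
    have hmem := qubitCoupling_mem_QCouplings (add_comm (√(B 0 0).re ^ 2) _ ▸ hc)
    rw [← hAq, ← hBq] at hmem
    exact ⟨_, hmem, trace_CQ_mul_qubitCoupling ..⟩
  · obtain rfl : A = B := h.eq_of_sqrtGap_eq_zero hA.1 hB.1 (by
      rw [sqrtGap_single, heq, sub_self])
    obtain ⟨R, hR, hcost⟩ := exists_mem_QCouplings_self_cost_eq_zero hA
    exact ⟨R, hR, by simp [hcost]⟩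
  · obtain ⟨c, hAq, hBq, hc⟩ := exists_eq_qubit_of_isOptimalDirection hA hB h hgt
    have hmem := qubitCoupling_mem_QCouplings hc
    rw [← hAq, ← hBq] at hmem
    exact ⟨_, hmem, trace_CQ_mul_qubitCoupling ..⟩

theorem IsOptimalDirection.QOT_CQ_eq {A B : Matrix (Fin 2) (Fin 2) ℂ}
    (h : IsOptimalDirection A B (Pi.single 0 1)) (hA : IsDensityMatrix A)
    (hB : IsDensityMatrix B) :
    QOT (CQ 2) A B = 1 / 2 * sqrtGap A B (Pi.single 0 1) ^ 2 := by
  rw [sqrtGap_single]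
  refine IsLeast.csInf_eq ⟨h.exists_coupling hA hB, ?_⟩
  rintro _ ⟨R, hR, rfl⟩
  exact half_sq_sqrt_sub_sqrt_le_cost hR 0

end Qubit

/-- the qubit quantum optimal transport cost as a maximum over
unitaries of a squared difference of square roots of first diagonal entries. -/
theorem qot_qubit_sup_formula (ρA ρB : Matrix (Fin 2) (Fin 2) ℂ)
    (hA : IsDensityMatrix ρA) (hB : IsDensityMatrix ρB) :
    QOT (CQ 2) ρA ρB =
      (1 / 2) * sSup {r : ℝ | ∃ U : Matrix (Fin 2) (Fin 2) ℂ, Uᴴ * U = 1 ∧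
        r = (Real.sqrt (((Uᴴ * ρA * U) 0 0).re) -
              Real.sqrt (((Uᴴ * ρB * U) 0 0).re)) ^ 2} := by
  obtain ⟨x, hx⟩ := exists_isOptimalDirection ρA ρB
  obtain ⟨U, hU, rfl⟩ := exists_unitary_mulVec_single (0 : Fin 2) hx.1
  have hentry (V : Matrix (Fin 2) (Fin 2) ℂ) :
      √((Vᴴ * ρA * V) 0 0).re - √((Vᴴ * ρB * V) 0 0).re =
        sqrtGap ρA ρB (V *ᵥ Pi.single 0 1) := by
    rw [← sqrtGap_conj, sqrtGap_single]
  simp only [hentry]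
  have hgreatest : IsGreatest {r : ℝ | ∃ V : Matrix (Fin 2) (Fin 2) ℂ, Vᴴ * V = 1 ∧
      r = sqrtGap ρA ρB (V *ᵥ Pi.single 0 1) ^ 2}
      (sqrtGap ρA ρB (U *ᵥ Pi.single 0 1) ^ 2) := by
    refine ⟨⟨U, hU, rfl⟩, ?_⟩
    rintro _ ⟨V, hV, rfl⟩
    exact hx.sq_sqrtGap_mulVec_le hV (by simp)
  rw [← QOT_CQ_conj ρA ρB hU, (hx.conj hU).QOT_CQ_eq (hA.conj hU) (hB.conj hU), sqrtGap_conj,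
    hgreatest.csSup_eq]
end
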